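/- arXiv:1405.1795 — 3 statements merged into one kernel-verified Lean document; each statement's English description precedes it below -/
import Mathlib

section
/- Let b, c \ge 2 be integers and q a prime power, and let N := {X \in M(c,K) : there exists a monic irreducible polynomial f \in F[t] with f \ne t such that X_{bc,q} is f-primary cyclic and deg f > (1/2)\cdot dim_F(range((X_{bc,q})^{bc}))}, where the range is taken in K^c viewed as a bc-dimensional F-vector space. Then |N|/q^{bc^2} > \log 2 - (\log 2 + 3)/c - 2(1 - 1/c)/q^{b/2}, where q^{bc^2} = |M(c,K)| and q^{b/2} denotes the real square root of q^b. -/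
open Matrix Polynomial Module

/-- `Y` is `f`-primary cyclic: the multiplicity of the (monic irreducible) polynomial `f`
in the characteristic polynomial of `Y` equals its multiplicity in the minimal
polynomial of `Y`, and this multiplicity is at least 1. -/
def IsPrimaryCyclic {E V : Type*} [Field E] [AddCommGroup V] [Module E V]
    [FiniteDimensional E V] (Y : V →ₗ[E] V) (f : Polynomial E) : Prop :=
  0 < multiplicity f (LinearMap.charpoly Y) ∧
    multiplicity f (LinearMap.charpoly Y) = multiplicity f (minpoly E Y)

section helpers
set_option linter.unusedSectionVars false
variable {K V : Type*} [Field K] [Finite K] [AddCommGroup V] [Module K V] [FiniteDimensional K V]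

lemma aux_fiber {d : ℕ} (w τ : Fin d → V) (hw : LinearIndependent K w) :
    Nat.card K ^ (finrank K V * (finrank K V - d)) ≤
      Nat.card {T : V →ₗ[K] V // ∀ i, T (w i) = τ i} := by
  have : Finite V := Module.finite_of_finite K
  have : Finite (V →ₗ[K] V) := Module.finite_of_finite K
  obtain ⟨T0, hT0⟩ : ∃ T : V →ₗ[K] V, ∀ i, T (w i) = τ i := by
    obtain ⟨T, hT⟩ := LinearMap.exists_extend ((Basis.span hw).constr K τ)
    refine ⟨T, fun i => ?_⟩
    have h1 := LinearMap.congr_fun hT (Basis.span hw i)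
    rw [Basis.constr_basis] at h1
    simpa [Basis.span_apply] using h1
  let R : (V →ₗ[K] V) →ₗ[K] (Fin d → V) := LinearMap.pi (fun i => LinearMap.applyₗ (w i))
  have h1 := R.finrank_range_add_finrank_ker
  have h2 : finrank K (LinearMap.range R) ≤ d * finrank K V := by
    refine (Submodule.finrank_le _).trans ?_
    simp [Module.finrank_pi_fintype]
  rw [Module.finrank_linearMap] at h1
  have h3 : finrank K V * (finrank K V - d) ≤ finrank K (LinearMap.ker R) := by
    rw [Nat.mul_sub, mul_comm _ d]; omega
  calc _ ≤ Nat.card K ^ finrank K (LinearMap.ker R) :=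
        Nat.pow_le_pow_right Nat.card_pos h3
    _ = Nat.card (LinearMap.ker R) := (Module.natCard_eq_pow_finrank).symm
    _ ≤ _ := by
      refine Nat.card_le_card_of_injective
        (fun S => ⟨T0 + S.1, fun i => ?_⟩) ?_
      · have := congrFun (LinearMap.mem_ker.1 S.2) i
        have h : (S.1 : V →ₗ[K] V) (w i) = 0 := this
        simp [hT0, h]
      · intro S S' h
        exact Subtype.ext (add_left_cancel (congrArg Subtype.val h))

/-- number of pairs (T, v) -/
lemma aux_pairs {d : ℕ} (hd : 0 < d) (hdc : d ≤ finrank K V) (g : K[X]) (hg : g.Monic)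
    (hgd : g.natDegree = d) :
    (∏ i : Fin d, (Nat.card K ^ finrank K V - Nat.card K ^ i.val)) *
      Nat.card K ^ (finrank K V * (finrank K V - d)) ≤
    Nat.card {p : (V →ₗ[K] V) × V // p.2 ≠ 0 ∧ aeval p.1 g p.2 = 0} := by
  classical
  have : Fintype K := Fintype.ofFinite K
  have : Finite V := Module.finite_of_finite K
  have : Finite (V →ₗ[K] V) := Module.finite_of_finite K
  let τ : (Fin d → V) → Fin d → V := fun w i =>
    if h : i.val + 1 < d then w ⟨i.val + 1, h⟩ else - ∑ j : Fin d, g.coeff j • w j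
  have key : ∀ (w : Fin d → V) (T : V →ₗ[K] V), (∀ i, T (w i) = τ w i) →
      ∀ i : ℕ, ∀ h : i < d, (T ^ i) (w ⟨0, hd⟩) = w ⟨i, h⟩ := by
    intro w T h i
    induction i with
    | zero => intro _; simp
    | succ i ih =>
      intro hi
      rw [pow_succ', Module.End.mul_apply, ih (by omega), h]
      simp [τ, hi]
  let S := Σ w : {w : Fin d → V // LinearIndependent K w}, {T : V →ₗ[K] V // ∀ i, T (w.1 i) = τ w.1 i}
  have hS : (∏ i : Fin d, (Nat.card K ^ finrank K V - Nat.card K ^ i.val)) *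
      Nat.card K ^ (finrank K V * (finrank K V - d)) ≤ Nat.card S := by
    have : Fintype {w : Fin d → V // LinearIndependent K w} := Fintype.ofFinite _
    rw [Nat.card_sigma]
    have h1 := card_linearIndependent (K := K) (V := V) hdc
    rw [Nat.card_eq_fintype_card (α := K), ← h1, Nat.card_eq_fintype_card, ← smul_eq_mul,
      Fintype.card, ← Finset.sum_const]
    refine Finset.sum_le_sum fun w _ => ?_
    rw [← Nat.card_eq_fintype_card (α := K)]
    exact aux_fiber _ _ w.2
  refine hS.trans (Nat.card_le_card_of_injective
    (fun s => ⟨(s.2.1, s.1.1 ⟨0, hd⟩), s.1.2.ne_zero _, ?_⟩) ?_)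
  · obtain ⟨⟨w, hw⟩, T, hT⟩ := s
    have hk := key w T hT
    have hlast : (T ^ d) (w ⟨0, hd⟩) = - ∑ j : Fin d, g.coeff j • w j := by
      obtain ⟨e, rfl⟩ : ∃ e, d = e + 1 := ⟨d - 1, by omega⟩
      rw [pow_succ', Module.End.mul_apply, hk e (by omega), hT]
      simp [τ]
    have hlc : g.coeff d = 1 := hgd ▸ hg.coeff_natDegree
    show aeval T g (w ⟨0, hd⟩) = 0
    rw [aeval_eq_sum_range, hgd, Finset.sum_range_succ, hlc, one_smul,
      LinearMap.add_apply, hlast, LinearMap.sum_apply, Finset.sum_range, ← sub_eq_add_neg, sub_eq_zero]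
    refine Finset.sum_congr rfl fun i _ => ?_
    rw [LinearMap.smul_apply, hk i i.2]
  · rintro ⟨⟨w, hw⟩, T, hT⟩ ⟨⟨w', hw'⟩, T', hT'⟩ h
    simp only [Subtype.mk.injEq, Prod.mk.injEq] at h
    obtain ⟨rfl, h0⟩ := h
    have : w = w' := by
      funext i
      rw [← key w T hT i i.2, ← key w' T hT' i i.2, h0]
    subst this
    rfl

lemma aux_coprime {T : V →ₗ[K] V} {p g : K[X]} (h : IsCoprime p g) {v : V}
    (hp : aeval T p v = 0) (hg : aeval T g v = 0) : v = 0 := by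
  obtain ⟨a, b, hab⟩ := h
  have := congrArg (fun r => aeval T r v) hab
  simpa [hp, hg] using this.symm

lemma aux_dvd_minpoly {T : V →ₗ[K] V} {g : K[X]} (hg : Irreducible g) {v : V} (hv : v ≠ 0)
    (h : aeval T g v = 0) : g ∣ minpoly K T := by
  by_contra hn
  exact hv (aux_coprime ((hg.coprime_iff_not_dvd).2 hn).symm (by simp [minpoly.aeval]) h)

lemma aux_unique {T : V →ₗ[K] V} {g g' : K[X]} (hg : Irreducible g) (hg' : Irreducible g')
    (hm : g.Monic) (hm' : g'.Monic) (hd : finrank K V < 2 * g.natDegree)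
    (hd' : finrank K V < 2 * g'.natDegree) {v v' : V} (hv : v ≠ 0) (hv' : v' ≠ 0)
    (h : aeval T g v = 0) (h' : aeval T g' v' = 0) : g = g' := by
  by_contra hne
  have hcop : IsCoprime g g' := by
    rw [hg.coprime_iff_not_dvd]
    intro hdv
    exact hne (eq_of_monic_of_associated hm hm' (hg.associated_of_dvd hg' hdv))
  have hdvd : g * g' ∣ T.charpoly :=
    (hcop.mul_dvd (aux_dvd_minpoly hg hv h) (aux_dvd_minpoly hg' hv' h')).trans
      (LinearMap.minpoly_dvd_charpoly T)
  have := natDegree_le_of_dvd hdvd T.charpoly_monic.ne_zero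
  rw [hm.natDegree_mul hm', LinearMap.charpoly_natDegree] at this
  omega

lemma aux_ker {T : V →ₗ[K] V} {g : K[X]} (hg : Irreducible g)
    (hm : g.Monic) (hd : finrank K V < 2 * g.natDegree) :
    finrank K (LinearMap.ker (aeval T g)) ≤ g.natDegree := by
  let φ : V → (degreeLT K g.natDegree →ₗ[K] V) := fun v =>
    (LinearMap.applyₗ v) ∘ₗ (aeval T).toLinearMap ∘ₗ (degreeLT K g.natDegree).subtype
  have hφ : ∀ v p, φ v p = aeval T p.1 v := fun v p => rfl
  have hfr : finrank K (degreeLT K g.natDegree) = g.natDegree := by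
    rw [(degreeLTEquiv K g.natDegree).finrank_eq]; simp
  have hcop : ∀ p : degreeLT K g.natDegree, p ≠ 0 → IsCoprime p.1 g := by
    intro p hp
    refine ((hg.coprime_iff_not_dvd).2 fun hdv => ?_).symm
    have h1 := mem_degreeLT.1 p.2
    rw [← degree_eq_natDegree hm.ne_zero] at h1
    exact hp (Subtype.ext (eq_zero_of_dvd_of_degree_lt hdv h1))
  by_contra! hlt
  have hfin : Module.Finite K (degreeLT K g.natDegree) :=
    Module.Finite.equiv (degreeLTEquiv K g.natDegree).symm
  obtain ⟨v, hv, hv0⟩ : ∃ v ∈ LinearMap.ker (aeval T g), v ≠ 0 := by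
    apply Submodule.exists_mem_ne_zero_of_ne_bot
    intro h
    rw [h, finrank_bot] at hlt
    omega
  have hr : finrank K (LinearMap.range (φ v)) ≤ g.natDegree := by
    have := LinearMap.finrank_range_le (φ v)
    rwa [hfr] at this
  obtain ⟨v', hv', hvr⟩ : ∃ v' ∈ LinearMap.ker (aeval T g), v' ∉ LinearMap.range (φ v) := by
    by_contra! hcon
    have := Submodule.finrank_mono (show LinearMap.ker (aeval T g) ≤ LinearMap.range (φ v) from hcon)
    omega
  have hinj : Function.Injective ((φ v).coprod (φ v')) := by
    rw [injective_iff_map_eq_zero]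
    rintro ⟨p, p'⟩ h
    rw [LinearMap.coprod_apply] at h
    simp only [hφ] at h
    have hp' : p' = 0 := by
      by_contra hne
      apply hvr
      obtain ⟨a, b, hab⟩ := hcop p' hne
      have h2 : aeval T (a * p'.1) v' = v' := by
        have h3 := congrArg (fun r => aeval T r v') hab
        have h4 : aeval T g v' = 0 := hv'
        simpa [h4] using h3
      have h5 : aeval T (-(a * p.1)) v = v' := by
        rw [← h2]
        simp only [map_neg, map_mul, LinearMap.neg_apply, Module.End.mul_apply]
        rw [← add_eq_zero_iff_neg_eq, ← map_add, h, map_zero]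
      refine ⟨⟨(-(a * p.1)) %ₘ g, ?_⟩, ?_⟩
      · rw [mem_degreeLT, ← degree_eq_natDegree hm.ne_zero]
        exact degree_modByMonic_lt _ hm
      · rw [hφ]
        have h6 := congrArg (fun r => aeval T r v) (modByMonic_add_div (-(a * p.1)) g)
        have h4 : aeval T g v = 0 := hv
        simp only [map_add, map_mul, LinearMap.add_apply, mul_comm g] at h6
        rw [Module.End.mul_apply, h4, map_zero, add_zero] at h6
        rw [h6, h5]
    subst hp'
    have hp : p = 0 := by
      by_contra hne
      exact hv0 (aux_coprime (hcop p hne) (by simpa using h) hv)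
    subst hp
    rfl
  have := LinearMap.finrank_le_finrank_of_injective hinj
  rw [Module.finrank_prod, hfr] at this
  omega

lemma aux_count {F L : Type*} [Field F] [Field L] [Algebra F K] [Algebra K L] [Algebra F L]
    [IsScalarTower F K L] [FiniteDimensional F L] [FiniteDimensional K L]
    {d : ℕ} (hd : 0 < d) (hdc : d ≤ finrank K V)
    (hL : finrank K L = d) (hcd : finrank K V < 2 * d) :
    Nat.card {α : L // IntermediateField.adjoin F {α} = ⊤} *
      ((∏ i : Fin d, (Nat.card K ^ finrank K V - Nat.card K ^ i.val)) *
        Nat.card K ^ (finrank K V * (finrank K V - d))) ≤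
    Nat.card {T : V →ₗ[K] V // ∃ α : L, IntermediateField.adjoin F {α} = ⊤ ∧
      ∃ v ≠ 0, aeval T (minpoly K α) v = 0} * ((Nat.card K ^ d - 1) * d) := by
  classical
  have : Finite V := Module.finite_of_finite K
  have : Finite L := Module.finite_of_finite K
  have : Finite (V →ₗ[K] V) := Module.finite_of_finite K
  have hdeg : ∀ α : L, IntermediateField.adjoin F {α} = ⊤ → (minpoly K α).natDegree = d := by
    intro α h
    rw [← hL, ← Field.primitive_element_iff_minpoly_natDegree_eq]
    exact IntermediateField.adjoin_eq_top_of_adjoin_eq_top F h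
  have hinte : ∀ α : L, IsIntegral K α := fun α => IsIntegral.of_finite K α
  let S := Σ α : {α : L // IntermediateField.adjoin F {α} = ⊤},
    {p : (V →ₗ[K] V) × V // p.2 ≠ 0 ∧ aeval p.1 (minpoly K α.1) p.2 = 0}
  let M := {T : V →ₗ[K] V // ∃ α : L, IntermediateField.adjoin F {α} = ⊤ ∧
      ∃ v ≠ 0, aeval T (minpoly K α) v = 0}
  let S' := Σ T : M, {p : V × L // p.1 ≠ 0 ∧ IntermediateField.adjoin F {p.2} = ⊤ ∧
    aeval T.1 (minpoly K p.2) p.1 = 0}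
  have h1 : Nat.card {α : L // IntermediateField.adjoin F {α} = ⊤} *
      ((∏ i : Fin d, (Nat.card K ^ finrank K V - Nat.card K ^ i.val)) *
        Nat.card K ^ (finrank K V * (finrank K V - d))) ≤ Nat.card S := by
    have : Fintype {α : L // IntermediateField.adjoin F {α} = ⊤} := Fintype.ofFinite _
    rw [Nat.card_sigma, Nat.card_eq_fintype_card, ← smul_eq_mul, Fintype.card, ← Finset.sum_const]
    exact Finset.sum_le_sum fun α _ =>
      aux_pairs hd hdc _ (minpoly.monic (hinte _)) (hdeg _ α.2)
  have h2 : Nat.card S ≤ Nat.card S' := by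
    refine Nat.card_le_card_of_injective (fun s => ⟨⟨s.2.1.1, s.1.1, s.1.2, s.2.1.2, s.2.2.1, s.2.2.2⟩,
      ⟨(s.2.1.2, s.1.1), s.2.2.1, s.1.2, s.2.2.2⟩⟩) ?_
    rintro ⟨⟨α, hα⟩, ⟨T, v⟩, hv⟩ ⟨⟨α', hα'⟩, ⟨T', v'⟩, hv'⟩ h
    have hT : T = T' := congrArg (fun s : S' => s.1.1) h
    have hv : v = v' := congrArg (fun s : S' => s.2.1.1) h
    have ha : α = α' := congrArg (fun s : S' => s.2.1.2) h
    subst hT hv ha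
    rfl
  have h3 : Nat.card S' ≤ Nat.card M * ((Nat.card K ^ d - 1) * d) := by
    have : Fintype M := Fintype.ofFinite _
    rw [Nat.card_sigma, Nat.card_eq_fintype_card (α := M), ← smul_eq_mul, Fintype.card,
      ← Finset.sum_const]
    refine Finset.sum_le_sum fun T _ => ?_
    obtain ⟨T, α, hα, v, hv, hTv⟩ := T
    have hker : Nat.card {v : LinearMap.ker (aeval T (minpoly K α)) // v ≠ 0} ≤ Nat.card K ^ d - 1 := by
      have : Fintype (LinearMap.ker (aeval T (minpoly K α))) := Fintype.ofFinite _
      rw [Nat.card_eq_fintype_card, Fintype.card_subtype_compl, Fintype.card_subtype_eq,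
        ← Nat.card_eq_fintype_card, Module.natCard_eq_pow_finrank (K := K)]
      refine Nat.sub_le_sub_right (Nat.pow_le_pow_right Nat.card_pos ?_) 1
      rw [← hdeg α hα]
      exact aux_ker (minpoly.irreducible (hinte _)) (minpoly.monic (hinte _)) (by rwa [hdeg α hα])
    have hroot : Nat.card ((minpoly K α).rootSet L) ≤ d := by
      rw [← hdeg α hα, Nat.card_eq_fintype_card]
      exact (Set.toFinset_card _).symm.trans_le (by
        simpa [rootSet_def] using ((Multiset.toFinset_card_le _).trans (card_roots' _)).trans
          (natDegree_map_le (f := algebraMap K L) (p := minpoly K α)))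
    refine le_trans ?_ (Nat.mul_le_mul hker hroot)
    rw [← Nat.card_prod]
    have hu : ∀ p : V × L, p.1 ≠ 0 → IntermediateField.adjoin F {p.2} = ⊤ →
      aeval T (minpoly K p.2) p.1 = 0 → minpoly K p.2 = minpoly K α := by
      intro p h1 h2 h3
      exact aux_unique (minpoly.irreducible (hinte _)) (minpoly.irreducible (hinte _))
        (minpoly.monic (hinte _)) (minpoly.monic (hinte _)) (by rwa [hdeg _ h2]) (by rwa [hdeg _ hα])
        h1 hv h3 hTv
    refine Nat.card_le_card_of_injective (fun p =>
      (⟨⟨p.1.1, ?_⟩, ?_⟩, ⟨p.1.2, ?_⟩)) ?_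
    · exact (congrArg (fun r => aeval T r p.1.1) (hu p.1 p.2.1 p.2.2.1 p.2.2.2)).symm.trans p.2.2.2
    · intro h
      exact p.2.1 (congrArg Subtype.val h)
    · rw [mem_rootSet]
      refine ⟨minpoly.ne_zero (hinte _), ?_⟩
      exact (congrArg (fun r => aeval p.1.2 r) (hu p.1 p.2.1 p.2.2.1 p.2.2.2)).symm.trans
        (minpoly.aeval _ _)
    · rintro ⟨⟨v, a⟩, h⟩ ⟨⟨v', a'⟩, h'⟩ hh
      have e1 : v = v' := congrArg (fun z => z.1.1.1) hh
      have e2 : a = a' := congrArg (fun z => z.2.1) hh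
      subst e1 e2
      rfl
  exact h1.trans (h2.trans h3)

lemma aux_gen {F L : Type*} [Field F] [Finite F] [Field L] [Algebra F L] [FiniteDimensional F L] :
    Nat.card F ^ finrank F L ≤ Nat.card {α : L // IntermediateField.adjoin F {α} = ⊤} +
      2 * Nat.card F ^ (finrank F L / 2) := by
  classical
  have : Finite L := Module.finite_of_finite F
  have : Fintype L := Fintype.ofFinite L
  set q := Nat.card F with hq
  have hq1 : 1 < q := Finite.one_lt_card
  set n := finrank F L with hn
  rw [← Module.natCard_eq_pow_finrank (K := F) (V := L), Nat.card_eq_fintype_card,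
    Nat.card_eq_fintype_card, Fintype.card_subtype, ← Finset.card_univ,
    ← Finset.card_filter_add_card_filter_not
      (s := Finset.univ) (fun α : L => IntermediateField.adjoin F {α} = ⊤)]
  refine Nat.add_le_add_left ?_ _
  have hsub : (Finset.univ.filter fun α : L => ¬ IntermediateField.adjoin F {α} = ⊤) ⊆
      (Finset.Icc 1 (n / 2)).biUnion fun k => (X ^ q ^ k - X : L[X]).roots.toFinset := by
    intro α hα
    rw [Finset.mem_filter] at hα
    have hα := hα.2
    let E := IntermediateField.adjoin F {α}
    have hmul : finrank F E * finrank E L = n := Module.finrank_mul_finrank F E L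
    have h1 : finrank E L ≠ 1 := fun h => hα (IntermediateField.finrank_eq_one_iff_eq_top.1 h)
    have h2 : 0 < finrank E L := Module.finrank_pos
    have h3 : 0 < finrank F E := Module.finrank_pos
    have h4 : finrank F E ≤ n / 2 := by
      rw [Nat.le_div_iff_mul_le (by norm_num), ← hmul]
      exact Nat.mul_le_mul_left _ (by omega)
    rw [Finset.mem_biUnion]
    refine ⟨finrank F E, Finset.mem_Icc.2 ⟨h3, h4⟩, ?_⟩
    rw [Multiset.mem_toFinset, mem_roots (FiniteField.X_pow_card_pow_sub_X_ne_zero L h3.ne' hq1)]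
    have : Fintype E := Fintype.ofFinite E
    have h5 := FiniteField.pow_card (⟨α, IntermediateField.mem_adjoin_simple_self F α⟩ : E)
    rw [← Nat.card_eq_fintype_card, Module.natCard_eq_pow_finrank (K := F)] at h5
    have h6 : α ^ q ^ finrank F E = α := congrArg Subtype.val h5
    simp [IsRoot, h6]
  refine (Finset.card_le_card hsub).trans (Finset.card_biUnion_le.trans ?_)
  have hb : ∀ k ∈ Finset.Icc 1 (n / 2), (X ^ q ^ k - X : L[X]).roots.toFinset.card ≤ q ^ k := by
    intro k hk
    refine (Multiset.toFinset_card_le _).trans ((card_roots' _).trans ?_)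
    rw [FiniteField.X_pow_card_pow_sub_X_natDegree_eq L (by have := (Finset.mem_Icc.1 hk).1; omega) hq1]
  refine (Finset.sum_le_sum hb).trans ?_
  generalize n / 2 = m
  induction m with
  | zero => simp
  | succ m ih =>
    rw [Finset.sum_Icc_succ_top (by omega)]
    have : 2 * q ^ m ≤ q ^ (m + 1) := by rw [pow_succ']; exact Nat.mul_le_mul_right _ hq1
    have ih' := ih
    omega

lemma aux_restrict {F : Type*} [Field F] [Algebra F K] [Module F V] [IsScalarTower F K V]
    (T : V →ₗ[K] V) (f : F[X]) (v : V) :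
    aeval (T.restrictScalars F) f v = aeval T (f.map (algebraMap F K)) v := by
  have hpow : ∀ n (v : V), ((T.restrictScalars F) ^ n) v = (T ^ n) v := by
    intro n
    induction n with
    | zero => intro v; simp
    | succ n ih => intro v; rw [pow_succ, pow_succ, Module.End.mul_apply, Module.End.mul_apply, ih]; rfl
  induction f using Polynomial.induction_on' with
  | add p q hp hq => simp [hp, hq]
  | monomial n a =>
    simp [aeval_monomial, hpow, Module.algebraMap_end_apply]

lemma aux_mem {F L : Type*} [Field F] [Finite F] [Field L] [Algebra F K] [Algebra K L] [Algebra F L]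
    [IsScalarTower F K L] [FiniteDimensional F L] [FiniteDimensional F K] [FiniteDimensional K L]
    [Module F V] [IsScalarTower F K V] [FiniteDimensional F V] (k : ℕ)
    (hb : 2 ≤ finrank F K) (hcd : finrank K V < 2 * finrank K L)
    (T : V →ₗ[K] V) (α : L) (hα : IntermediateField.adjoin F {α} = ⊤) (v : V) (hv : v ≠ 0)
    (h : aeval T (minpoly K α) v = 0) :
    ∃ f : Polynomial F,
      f.Monic ∧ Irreducible f ∧ f ≠ Polynomial.X ∧
      IsPrimaryCyclic (T.restrictScalars F) f ∧
      Module.finrank F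
          (LinearMap.range ((T.restrictScalars F) ^ k)) <
        2 * f.natDegree := by
  have hinte : IsIntegral F α := IsIntegral.of_finite F α
  have hdeg : (minpoly F α).natDegree = finrank F K * finrank K L := by
    rw [Module.finrank_mul_finrank, ← Field.primitive_element_iff_minpoly_natDegree_eq]
    exact hα
  have hV : finrank F V < 2 * (minpoly F α).natDegree := by
    rw [hdeg, ← Module.finrank_mul_finrank F K V]
    nlinarith
  have hirr := minpoly.irreducible hinte
  have hmon := minpoly.monic hinte
  have hdv : minpoly F α ∣ minpoly F (T.restrictScalars F) := by
    refine aux_dvd_minpoly hirr hv ?_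
    rw [aux_restrict]
    obtain ⟨r, hr⟩ := minpoly.dvd_map_of_isScalarTower F K α
    rw [hr, mul_comm, map_mul, Module.End.mul_apply, h, map_zero]
  have hdc : minpoly F (T.restrictScalars F) ∣ (T.restrictScalars F).charpoly :=
    LinearMap.minpoly_dvd_charpoly _
  have hsq : ¬ minpoly F α ^ (1 + 1) ∣ (T.restrictScalars F).charpoly := by
    intro hd
    have := natDegree_le_of_dvd hd (T.restrictScalars F).charpoly_monic.ne_zero
    rw [hmon.natDegree_pow, LinearMap.charpoly_natDegree] at this
    omega
  have m1 := multiplicity_eq_of_dvd_of_not_dvd (k := 1) (by simpa using hdv.trans hdc) hsq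
  have m2 := multiplicity_eq_of_dvd_of_not_dvd (k := 1) (by simpa using hdv)
    (fun h => hsq (h.trans hdc))
  refine ⟨minpoly F α, hmon, hirr, ?_, ⟨?_, ?_⟩, ?_⟩
  · intro hX
    rw [hX, natDegree_X] at hdeg
    have : 0 < finrank K L := Module.finrank_pos
    nlinarith
  · rw [m1]; norm_num
  · rw [m1, m2]
  · exact (Submodule.finrank_le _).trans_lt hV

end helpers

lemma aux_prod (Q : ℕ) (hQ : 4 ≤ Q) (c d : ℕ) (hd : d ≤ c) :
    (Q : ℝ) ^ (c * d) * (1 - 2 / Q) ≤ ((∏ i : Fin d, (Q ^ c - Q ^ i.val) : ℕ) : ℝ) := by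
  have hQ' : (4 : ℝ) ≤ Q := by exact_mod_cast hQ
  have hQ0 : (0 : ℝ) < Q := by linarith
  have key : ∀ d ≤ c, (Q : ℝ) ^ (c * d) * (1 - 2 * (Q : ℝ) ^ d / Q ^ (c + 1)) ≤
      ((∏ i : Fin d, (Q ^ c - Q ^ i.val) : ℕ) : ℝ) := by
    intro d
    induction d with
    | zero =>
      intro _
      simp
      positivity
    | succ d ih =>
      intro hd
      have ih := ih (by omega)
      rw [Fin.prod_univ_castSucc, Nat.cast_mul]
      simp only [Fin.val_castSucc, Fin.val_last]
      rw [Nat.cast_sub (Nat.pow_le_pow_right (by omega) (by omega))]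
      push_cast at ih ⊢
      have h1 : (Q : ℝ) ^ d ≤ Q ^ c := pow_le_pow_right₀ (by linarith) (by omega)
      refine le_trans ?_ (mul_le_mul_of_nonneg_right ih (sub_nonneg.2 h1))
      have hx : (0 : ℝ) < Q ^ c := by positivity
      have hy : (0 : ℝ) < Q ^ d := by positivity
      have e1 : (Q : ℝ) ^ c - Q ^ d = Q ^ c * (1 - Q ^ d / Q ^ c) := by field_simp
      rw [e1, mul_add c d 1, pow_add, mul_one c, mul_mul_mul_comm]
      refine mul_le_mul_of_nonneg_left ?_ (by positivity)
      have e2 : 2 * (Q : ℝ) ^ (d + 1) / Q ^ (c + 1) = 2 * (Q ^ d / Q ^ c) := by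
        rw [pow_succ, pow_succ]; field_simp
      have e3 : 2 * (Q : ℝ) ^ d / Q ^ (c + 1) = 2 / Q * (Q ^ d / Q ^ c) := by
        rw [pow_succ]; field_simp
      rw [e2, e3]
      set t := (Q : ℝ) ^ d / Q ^ c
      have ht : 0 < t := by positivity
      have h2 : 2 / (Q : ℝ) ≤ 1 := by rw [div_le_one hQ0]; linarith
      have h3 : 0 < 2 / (Q : ℝ) := by positivity
      nlinarith [mul_pos h3 (mul_pos ht ht)]
  refine le_trans ?_ (key d hd)
  refine mul_le_mul_of_nonneg_left ?_ (by positivity)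
  have : (Q : ℝ) ^ d ≤ Q ^ c := pow_le_pow_right₀ (by linarith) hd
  have e : 2 * (Q : ℝ) ^ d / Q ^ (c + 1) ≤ 2 / Q := by
    rw [pow_succ, div_le_div_iff₀ (by positivity) hQ0]
    nlinarith
  linarith

lemma aux_harm (c : ℕ) (hc : 2 ≤ c) :
    Real.log 2 - 1 / c ≤ ∑ d ∈ Finset.Ioc (c / 2) c, (1 / (d : ℝ)) := by
  have key : ∀ a n : ℕ, a ≤ n → Real.log (n + 1) - Real.log (a + 1) ≤
      ∑ d ∈ Finset.Ioc a n, (1 / (d : ℝ)) := by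
    intro a n h
    induction n, h using Nat.le_induction with
    | base => simp
    | succ n hn ih =>
      rw [Finset.sum_Ioc_succ_top hn]
      have h1 : Real.log (((n + 1 : ℕ) : ℝ) + 1) - Real.log (n + 1) ≤ 1 / ((n + 1 : ℕ) : ℝ) := by
        have hn1 : (0 : ℝ) < (n : ℝ) + 1 := by positivity
        rw [← Real.log_div (by positivity) (by positivity)]
        refine (Real.log_le_sub_one_of_pos (by positivity)).trans (le_of_eq ?_)
        push_cast
        field_simp
        ring
      linarith
  refine le_trans ?_ (key (c / 2) c (by omega))
  have hc0 : (0 : ℝ) < c := by exact_mod_cast (by omega : 0 < c)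
  have h1 : (((c / 2 : ℕ) : ℝ) + 1) ≤ (c + 2) / 2 := by
    have : ((c / 2 : ℕ) : ℝ) ≤ c / 2 := Nat.cast_div_le
    linarith
  have h2 := Real.log_le_log (by positivity) h1
  rw [Real.log_div (by positivity) (by norm_num)] at h2
  have h3 : Real.log ((c : ℝ) + 2) - Real.log (c + 1) ≤ 1 / c := by
    rw [← Real.log_div (by positivity) (by positivity)]
    refine (Real.log_le_sub_one_of_pos (by positivity)).trans ?_
    have : ((c : ℝ) + 2) / (c + 1) - 1 = 1 / (c + 1) := by field_simp; ring
    rw [this]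
    exact one_div_le_one_div_of_le hc0 (by linarith)
  linarith

lemma aux_final (c : ℕ) (hc : 2 ≤ c) (Q : ℝ) (hQ : 4 ≤ Q) :
    Real.log 2 - (Real.log 2 + 3) / (c : ℝ) - 2 * (1 - 1 / (c : ℝ)) / Real.sqrt Q <
      (Real.log 2 - 1 / c) * (1 - 4 / Q) := by
  have hc0 : (0 : ℝ) < c := by exact_mod_cast (by omega : 0 < c)
  set s := Real.sqrt Q with hs
  have hs2 : 2 ≤ s := by
    rw [hs]; apply Real.le_sqrt_of_sq_le; linarith
  have hss : s * s = Q := Real.mul_self_sqrt (by linarith)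
  rw [← hss]
  have hl := Real.log_two_lt_d9
  have hl' := Real.log_two_gt_d9
  set l := Real.log 2
  set u := 1 / s with hu
  have hu0 : 0 < u := by positivity
  have hu2 : u ≤ 1 / 2 := by rw [hu]; exact one_div_le_one_div_of_le (by norm_num) hs2
  set x := 1 / (c : ℝ) with hx
  have hx0 : 0 < x := by positivity
  have e1 : (l + 3) / (c : ℝ) = (l + 3) * x := by rw [hx]; ring
  have e2 : 2 * (1 - x) / s = 2 * (1 - x) * u := by rw [hu]; ring
  have e3 : 4 / (s * s) = 4 * (u * u) := by rw [hu]; field_simp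
  rw [e1, e2, e3]
  nlinarith [mul_pos hx0 hu0, mul_pos hx0 (mul_pos hu0 hu0), mul_nonneg hu0.le (sub_nonneg.2 hu2),
    mul_nonneg hx0.le (sub_nonneg.2 hu2), mul_nonneg (mul_nonneg hu0.le (sub_nonneg.2 hu2)) (by linarith : (0 : ℝ) ≤ l)]

section perd
variable {K V : Type*} [Field K] [Finite K] [AddCommGroup V] [Module K V] [FiniteDimensional K V]

lemma aux_perd {F : Type*} [Field F] [Finite F] [Algebra F K] [FiniteDimensional F K]
    [Module F V] [IsScalarTower F K V] [FiniteDimensional F V] (k : ℕ)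
    (hb : 2 ≤ finrank F K) {d : ℕ} (hd : 2 ≤ d) (hdc : d ≤ finrank K V)
    (hcd : finrank K V < 2 * d) :
    ∃ M : Set (V →ₗ[K] V),
      (∀ T ∈ M, (∃ g : K[X], g.Monic ∧ Irreducible g ∧ g.natDegree = d ∧ ∃ v ≠ 0, aeval T g v = 0) ∧
        ∃ f : Polynomial F,
          f.Monic ∧ Irreducible f ∧ f ≠ Polynomial.X ∧
          IsPrimaryCyclic (T.restrictScalars F) f ∧
          Module.finrank F (LinearMap.range ((T.restrictScalars F) ^ k)) < 2 * f.natDegree) ∧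
      (Nat.card K : ℝ) ^ (finrank K V ^ 2) * (1 - 4 / (Nat.card K : ℝ)) * (1 / (d : ℝ)) ≤ Nat.card M := by
  obtain ⟨p, hp⟩ := CharP.exists K
  have : Fact p.Prime := ⟨CharP.char_is_prime K p⟩
  have : NeZero d := ⟨by omega⟩
  let L := FiniteField.Extension K p d
  have hL : finrank K L = d := FiniteField.finrank_extension K p d
  let : Algebra F L := ((algebraMap K L).comp (algebraMap F K)).toAlgebra
  have : IsScalarTower F K L := IsScalarTower.of_algebraMap_eq' rfl
  have : FiniteDimensional F L := FiniteDimensional.trans F K L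
  have hcount := aux_count (F := F) (K := K) (V := V) (L := L) (by omega) hdc hL hcd
  have hgen := aux_gen (F := F) (L := L)
  refine ⟨{T : V →ₗ[K] V | ∃ α : L, IntermediateField.adjoin F {α} = ⊤ ∧
      ∃ v ≠ 0, aeval T (minpoly K α) v = 0}, ?_, ?_⟩
  · rintro T ⟨α, hα, v, hv, h⟩
    refine ⟨⟨minpoly K α, minpoly.monic (IsIntegral.of_finite K α),
      minpoly.irreducible (IsIntegral.of_finite K α), ?_, v, hv, h⟩, ?_⟩
    · refine Eq.trans ?_ hL
      rw [← Field.primitive_element_iff_minpoly_natDegree_eq]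
      exact IntermediateField.adjoin_eq_top_of_adjoin_eq_top F hα
    · exact aux_mem k hb (by rwa [hL]) T α hα v hv h
  · set m := Nat.card {T : V →ₗ[K] V // ∃ α : L, IntermediateField.adjoin F {α} = ⊤ ∧
      ∃ v ≠ 0, aeval T (minpoly K α) v = 0} with hm
    change _ ≤ (m : ℝ)
    have hFL : finrank F L = finrank F K * d := by
      have := Module.finrank_mul_finrank F K L
      rw [hL] at this; exact this.symm
    have hKF : Nat.card K = Nat.card F ^ finrank F K := Module.natCard_eq_pow_finrank
    rw [hFL] at hgen
    set G := Nat.card {α : L // IntermediateField.adjoin F {α} = ⊤}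
    set c := finrank K V
    have hq1 : 1 < Nat.card F := Finite.one_lt_card
    have hQ4 : 4 ≤ Nat.card K := by
      rw [hKF]
      calc 4 = 2 ^ 2 := by norm_num
        _ ≤ Nat.card F ^ 2 := Nat.pow_le_pow_left hq1 2
        _ ≤ _ := Nat.pow_le_pow_right (by omega) hb
    have hexp : Nat.card F ^ (finrank F K * d / 2) ≤ Nat.card K ^ (d - 1) := by
      rw [hKF, ← pow_mul]
      refine Nat.pow_le_pow_right (by omega) ?_
      obtain ⟨e, rfl⟩ : ∃ e, d = e + 2 := ⟨d - 2, by omega⟩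
      refine Nat.div_le_of_le_mul ?_
      have : e + 2 - 1 = e + 1 := by omega
      rw [this]
      nlinarith [Nat.zero_le (finrank F K * e)]
    rw [pow_mul, ← hKF] at hgen
    have hprod := aux_prod (Nat.card K) hQ4 c d hdc
    set P := ∏ i : Fin d, (Nat.card K ^ c - Nat.card K ^ i.val)
    set Q := Nat.card K
    have hQ : (4 : ℝ) ≤ Q := by exact_mod_cast hQ4
    have hQ0 : (0 : ℝ) < Q := by linarith
    have hG : (Q : ℝ) ^ d * (1 - 2 / Q) ≤ G := by
      have h1 : Q ^ d ≤ G + 2 * Q ^ (d - 1) := hgen.trans (by omega)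
      have h2 : (Q : ℝ) ^ d ≤ G + 2 * Q ^ (d - 1) := by exact_mod_cast h1
      have h3 : (Q : ℝ) ^ d = Q ^ (d - 1) * Q := by rw [← pow_succ]; congr 1; omega
      have h4 : (Q : ℝ) ^ d * (1 - 2 / Q) = Q ^ d - 2 * Q ^ (d - 1) := by
        rw [h3]; field_simp
      linarith
    have hd0 : (0 : ℝ) < d := by exact_mod_cast (by omega : 0 < d)
    have hc1 : (G : ℝ) * (P * Q ^ (c * (c - d))) ≤ m * (Q ^ d * d) := by
      have : G * (P * Q ^ (c * (c - d))) ≤ m * (Q ^ d * d) :=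
        hcount.trans (Nat.mul_le_mul_left _ (Nat.mul_le_mul_right _ (Nat.sub_le _ _)))
      exact_mod_cast this
    have hQtwo : 2 / (Q : ℝ) ≤ 1 := by rw [div_le_one hQ0]; linarith
    have hnn : 0 ≤ 1 - 2 / (Q : ℝ) := by linarith
    have hlow : ((Q : ℝ) ^ d * (1 - 2 / Q)) * ((Q ^ (c * d) * (1 - 2 / Q)) * Q ^ (c * (c - d))) ≤
        (G : ℝ) * (P * Q ^ (c * (c - d))) := by
      refine mul_le_mul hG (mul_le_mul_of_nonneg_right hprod (by positivity)) ?_ (by positivity)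
      positivity
    have hpow : (Q : ℝ) ^ (c * d) * Q ^ (c * (c - d)) = Q ^ (c ^ 2) := by
      rw [← pow_add, ← mul_add, sq]; congr 2; omega
    have h5 : (Q : ℝ) ^ d * (Q ^ (c ^ 2) * (1 - 2 / Q) ^ 2) ≤ Q ^ d * (m * d) := by
      rw [← hpow]
      calc _ = ((Q : ℝ) ^ d * (1 - 2 / Q)) * ((Q ^ (c * d) * (1 - 2 / Q)) * Q ^ (c * (c - d))) := by ring
        _ ≤ m * (Q ^ d * d) := hlow.trans hc1
        _ = _ := by ring
    have h6 := le_of_mul_le_mul_left h5 (by positivity)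
    have h7 : 1 - 4 / (Q : ℝ) ≤ (1 - 2 / Q) ^ 2 := by
      have : (1 - 2 / (Q : ℝ)) ^ 2 = 1 - 4 / Q + (2 / Q) ^ 2 := by ring
      rw [this]; have : 0 ≤ (2 / (Q : ℝ)) ^ 2 := by positivity
      linarith
    rw [mul_one_div, div_le_iff₀ hd0]
    exact (mul_le_mul_of_nonneg_left h7 (by positivity)).trans h6

end perd

theorem stmt9 (q b c : ℕ) (hq : IsPrimePow q) (hb : 2 ≤ b) (hc : 2 ≤ c)
    (F K : Type*) [Field F] [Fintype F] (hF : Fintype.card F = q)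
    [Field K] [Algebra F K] [FiniteDimensional F K] (hK : Module.finrank F K = b)
    (N : Set (Matrix (Fin c) (Fin c) K))
    (hN : N = {A : Matrix (Fin c) (Fin c) K | ∃ f : Polynomial F,
      f.Monic ∧ Irreducible f ∧ f ≠ Polynomial.X ∧
      IsPrimaryCyclic ((A.mulVecLin).restrictScalars F) f ∧
      Module.finrank F
          (LinearMap.range (((A.mulVecLin).restrictScalars F) ^ (b * c))) <
        2 * f.natDegree}) :
    Real.log 2 - (Real.log 2 + 3) / (c : ℝ) - 2 * (1 - 1 / (c : ℝ)) / Real.sqrt ((q : ℝ) ^ b) <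
      (Nat.card N : ℝ) / (q : ℝ) ^ (b * c ^ 2) := by
  classical
  have hfK : Finite K := Module.finite_of_finite F
  have hfV : Finite ((Fin c → K) →ₗ[K] (Fin c → K)) := Module.finite_of_finite K
  have hV : finrank K (Fin c → K) = c := by simp
  have hcK : Nat.card K = q ^ b := by
    rw [← hK, ← hF, ← Nat.card_eq_fintype_card]; exact Module.natCard_eq_pow_finrank
  have hq1 : 1 < q := hq.one_lt
  have hQ4 : (4 : ℝ) ≤ (q : ℝ) ^ b := by
    have : 4 ≤ q ^ b := calc
      4 = 2 ^ 2 := by norm_num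
      _ ≤ q ^ 2 := Nat.pow_le_pow_left hq1 2
      _ ≤ _ := Nat.pow_le_pow_right (by omega) hb
    exact_mod_cast this
  have hex := fun d : {d // d ∈ Finset.Ioc (c / 2) c} =>
    aux_perd (K := K) (V := Fin c → K) (F := F) (b * c) (by rw [hK]; exact hb) (d := d.1)
      (by have := Finset.mem_Ioc.1 d.2; omega)
      (by have := Finset.mem_Ioc.1 d.2; omega)
      (by have := Finset.mem_Ioc.1 d.2; omega)
  choose M hM1 hM2 using hex
  rw [hV, hcK] at hM2
  have hcard : ∑ d : {d // d ∈ Finset.Ioc (c / 2) c}, Nat.card (M d) ≤ Nat.card N := by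
    rw [← Nat.card_sigma]
    have : Finite N := Subtype.finite
    refine Nat.card_le_card_of_injective
      (fun s => ⟨LinearMap.toMatrix' s.2.1, ?_⟩) ?_
    · rw [hN, Set.mem_ofPred_eq]
      have : (LinearMap.toMatrix' s.2.1).mulVecLin = s.2.1 := Matrix.toLin'_toMatrix' _
      rw [this]
      exact (hM1 s.1 s.2.1 s.2.2).2
    · rintro ⟨d, T, hT⟩ ⟨d', T', hT'⟩ h
      have hTT : T = T' := LinearMap.toMatrix'.injective (congrArg Subtype.val h)
      subst hTT
      have hdd : d = d' := by
        obtain ⟨g, g1, g2, g3, v, g4, g5⟩ := (hM1 d T hT).1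
        obtain ⟨g', g1', g2', g3', v', g4', g5'⟩ := (hM1 d' T hT').1
        have m1 := Finset.mem_Ioc.1 d.2
        have m2 := Finset.mem_Ioc.1 d'.2
        have := aux_unique g2 g2' g1 g1' (by omega) (by omega) g4 g4' g5 g5'
        apply Subtype.ext
        rw [← g3, ← g3', this]
      subst hdd
      rfl
  have hsum : (q : ℝ) ^ (b * c ^ 2) * (1 - 4 / (q : ℝ) ^ b) *
      ∑ d ∈ Finset.Ioc (c / 2) c, (1 / (d : ℝ)) ≤ Nat.card N := by
    refine le_trans ?_ (Nat.cast_le.2 hcard)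
    rw [Nat.cast_sum, Finset.mul_sum, ← Finset.sum_coe_sort]
    refine Finset.sum_le_sum fun d _ => ?_
    have := hM2 d
    push_cast at this
    rwa [← pow_mul] at this
  have hpos : (0 : ℝ) < (q : ℝ) ^ (b * c ^ 2) := by
    have : (0 : ℝ) < q := by exact_mod_cast (by omega : 0 < q)
    positivity
  refine (aux_final c hc _ hQ4).trans_le ?_
  rw [le_div_iff₀ hpos]
  refine le_trans ?_ hsum
  have h4 : 0 ≤ 1 - 4 / (q : ℝ) ^ b := by
    rw [sub_nonneg, div_le_one (by linarith)]; exact hQ4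
  calc _ = (q : ℝ) ^ (b * c ^ 2) * (1 - 4 / (q : ℝ) ^ b) * (Real.log 2 - 1 / c) := by ring
    _ ≤ _ := mul_le_mul_of_nonneg_left (aux_harm c hc) (by positivity)
end

section
/- Let f \in F[t] be monic irreducible and X \in M(c,K) be such that f divides charpoly_F(X). Then X_{bc,q} is f-primary cyclic if and only if b divides deg(f) and there exists a monic irreducible g \in K[t] of degree deg(f)/b dividing the image of f in K[t] such that: (i) X_{c,q^b} is g-primary cyclic, and (ii) for every nontrivial \tau \in Gal(K/F), g^{\tau} \ne g and g^{\tau} does not divide charpoly_K(X). -/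
open Matrix Polynomial Module

section helpers

variable {F K : Type*} [Field F] [Field K] [Algebra F K] [FiniteDimensional F K]

theorem aux_det_ne [IsGalois F K] [DecidableEq (K ≃ₐ[F] K)] (e : Basis (K ≃ₐ[F] K) F K) :
    IsUnit (Matrix.of (fun (τ : K ≃ₐ[F] K) (i : K ≃ₐ[F] K) => τ (e i))) := by
  rw [← Matrix.vecMul_injective_iff_isUnit]
  intro v w hvw
  have hli := linearIndependent_toLinearMap F K K
  have hli2 : LinearIndependent K (fun τ : K ≃ₐ[F] K => (τ : K →ₐ[F] K).toLinearMap) :=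
    hli.comp (fun τ : K ≃ₐ[F] K => (τ : K →ₐ[F] K)) (fun a b hab => by
      ext x; exact DFunLike.congr_fun hab x)
  rw [Fintype.linearIndependent_iff] at hli2
  have key : ∑ τ, (v - w) τ • (τ : K →ₐ[F] K).toLinearMap = 0 := by
    refine e.ext (fun i => ?_)
    have := congrFun hvw i
    simp only [Matrix.vecMul, dotProduct, Matrix.of_apply] at this
    simp [LinearMap.sum_apply, sub_mul, Finset.sum_sub_distrib, this]
  funext i
  exact sub_eq_zero.1 (hli2 _ key i)

theorem aux_charpoly [Fintype F] [IsGalois F K] {c : ℕ} (A : Matrix (Fin c) (Fin c) K) :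
    (LinearMap.charpoly ((A.mulVecLin).restrictScalars F)).map (algebraMap F K)
      = ∏ τ : K ≃ₐ[F] K, (LinearMap.charpoly A.mulVecLin).map (τ : K →+* K) := by
  classical
  have hcard : Fintype.card (K ≃ₐ[F] K) = Module.finrank F K := by
    rw [← Nat.card_eq_fintype_card, IsGalois.card_aut_eq_finrank]
  let e : Basis (K ≃ₐ[F] K) F K :=
    (Module.finBasis F K).reindex (Fintype.equivOfCardEq (by simp [hcard]))
  obtain ⟨P, hP⟩ := aux_det_ne e
  let bA := Pi.basisFun K (Fin c)
  rw [← LinearMap.charpoly_toMatrix _ (e.smulTower' bA), LinearMap.restrictScalars_toMatrix,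
    ← Matrix.charpoly_map]
  have hA : LinearMap.toMatrix bA bA A.mulVecLin = A := by
    exact LinearMap.toMatrix'_toLin' A
  rw [hA]
  simp only [Matrix.charpoly_mulVecLin, ← Matrix.charpoly_map]
  set M := (Matrix.comp (Fin c) (Fin c) (K ≃ₐ[F] K) (K ≃ₐ[F] K) F
    (A.map (Algebra.leftMulMatrix e))).map (algebraMap F K) with hM
  set D : Matrix (Fin c × (K ≃ₐ[F] K)) (Fin c × (K ≃ₐ[F] K)) K :=
    Matrix.blockDiagonal (fun τ : K ≃ₐ[F] K => A.map (τ : K →+* K)) with hD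
  let Q : (Matrix (Fin c × (K ≃ₐ[F] K)) (Fin c × (K ≃ₐ[F] K)) K)ˣ :=
    ⟨Matrix.kronecker 1 P.val, Matrix.kronecker 1 (P⁻¹).val,
      by simp [Matrix.kronecker, ← Matrix.mul_kronecker_mul], by simp [Matrix.kronecker, ← Matrix.mul_kronecker_mul]⟩
  have hQ : Q.val * M = D * Q.val := by
    ext ⟨i, τ⟩ ⟨j, σ⟩
    have h1 : (Q.val * M) (i, τ) (j, σ) = τ (A i j * e σ) := by
      simp only [Matrix.mul_apply, Fintype.sum_prod_type, Q, Matrix.kronecker_apply,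
        Matrix.one_apply, hM, hP, Matrix.map_apply, Matrix.comp_apply, Matrix.of_apply]
      rw [Finset.sum_eq_single i (by intro b _ hb; simp [Ne.symm hb]) (by simp)]
      rw [← e.sum_repr (A i j * e σ), map_sum]
      refine Finset.sum_congr rfl (fun ρ _ => ?_)
      simp [Algebra.smul_def, mul_comm, Algebra.leftMulMatrix_eq_repr_mul]
    have h3 : (D * Q.val) (i, τ) (j, σ) = τ (A i j) * τ (e σ) := by
      simp only [Matrix.mul_apply, Fintype.sum_prod_type, Q, Matrix.kronecker_apply,
        Matrix.one_apply, hD, hP, Matrix.map_apply, Matrix.of_apply, Matrix.blockDiagonal_apply]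
      rw [Finset.sum_eq_single j (by intro b _ hb; simp [hb]) (by simp),
        Finset.sum_eq_single τ (by intro b _ hb; simp [Ne.symm hb]) (by simp)]
      simp
    rw [h1, h3, map_mul]
  have hM2 : M = (Q⁻¹).val * D * Q.val := by
    rw [mul_assoc, ← hQ, ← mul_assoc, Units.inv_mul, one_mul]
  have hM3 : M.charpoly = D.charpoly := by
    rw [hM2]
    simpa using Matrix.charpoly_units_conj' Q D
  rw [hM3, Matrix.charpoly]
  have hD2 : D.charmatrix = Matrix.blockDiagonal
      (fun τ : K ≃ₐ[F] K => (A.map (τ : K →+* K)).charmatrix) := by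
    ext1 ⟨i, τ⟩ ⟨j, σ⟩
    by_cases h : τ = σ
    · subst h
      by_cases h' : i = j
      · subst h'
        simp [hD, Matrix.blockDiagonal_apply]
      · simp [hD, Matrix.blockDiagonal_apply, Matrix.charmatrix_apply_ne, h']
    · rw [Matrix.charmatrix_apply_ne _ _ _ (by simp [h])]
      simp [hD, Matrix.blockDiagonal_apply, h]
  rw [hD2, Matrix.det_blockDiagonal]
  rfl

theorem aux_aeval {V : Type*} [AddCommGroup V] [Module F V] [Module K V] [IsScalarTower F K V]
    (Y : V →ₗ[K] V) (h : F[X]) :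
    aeval (Y.restrictScalars F) h = (aeval Y (h.map (algebraMap F K))).restrictScalars F := by
  induction h using Polynomial.induction_on' with
  | add p q hp hq => simp [hp, hq, LinearMap.restrictScalars_add]
  | monomial n a =>
    have h2 : ∀ n : ℕ, (Y.restrictScalars F) ^ n = (Y ^ n).restrictScalars F := by
      intro n
      ext x
      simp [Module.End.pow_apply]
    ext x
    simp [aeval_monomial, h2]

theorem aux_minpoly_dvd {V : Type*} [AddCommGroup V] [Module F V] [Module K V]
    [IsScalarTower F K V] (Y : V →ₗ[K] V) (h : F[X]) :
    minpoly F (Y.restrictScalars F) ∣ h ↔ minpoly K Y ∣ h.map (algebraMap F K) := by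
  rw [minpoly.dvd_iff, minpoly.dvd_iff, aux_aeval]
  exact ⟨fun h => LinearMap.restrictScalars_injective F (by simpa using h), fun h => by simp [h]⟩

theorem aux_not_dvd {f h : F[X]} (hfi : Irreducible f) {p : K[X]} (hp : Irreducible p)
    (hpf : p ∣ f.map (algebraMap F K)) (hh : ¬ f ∣ h) : ¬ p ∣ h.map (algebraMap F K) := by
  intro h1
  have hc : IsCoprime f h := (hfi.coprime_iff_not_dvd).2 hh
  have := hc.map (mapRingHom (algebraMap F K))
  exact hp.not_isUnit (this.isUnit_of_dvd' hpf h1)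

theorem aux_mult {f h : F[X]} (hfi : Irreducible f) (hs : f.Separable) {p : K[X]}
    (hp : Irreducible p) (hpf : p ∣ f.map (algebraMap F K)) (hh : h ≠ 0) :
    emultiplicity p (h.map (algebraMap F K)) = emultiplicity f h := by
  have hfin : FiniteMultiplicity f h := FiniteMultiplicity.of_prime_left hfi.prime hh
  obtain ⟨h', hh', hn⟩ := hfin.exists_eq_pow_mul_and_not_dvd
  have h1 : emultiplicity p (f.map (algebraMap F K)) = 1 := by
    have hsq : Squarefree (f.map (algebraMap F K)) := (hs.map).squarefree
    have := (squarefree_iff_emultiplicity_le_one _).1 hsq p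
    have h3 := dvd_iff_emultiplicity_pos.2 hpf
    rcases this with h | h
    · exact le_antisymm h (Order.one_le_iff_pos.2 h3)
    · exact absurd h hp.not_isUnit
  rw [hfin.emultiplicity_eq_multiplicity]
  conv_lhs => rw [hh']
  rw [Polynomial.map_mul, Polynomial.map_pow, emultiplicity_mul hp.prime,
    emultiplicity_pow hp.prime, h1, emultiplicity_eq_zero.2 (aux_not_dvd hfi hp hpf hn)]
  simp

theorem aux_prod_s10 [IsGalois F K] {f : F[X]} (hfi : Irreducible f) {g : K[X]}
    (hg : Irreducible g) (hgf : g ∣ f.map (algebraMap F K)) :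
    f.map (algebraMap F K) ∣ ∏ τ : K ≃ₐ[F] K, g.map (τ : K →+* K) := by
  have hfix : ∃ G : F[X], G.map (algebraMap F K) = ∏ τ : K ≃ₐ[F] K, g.map (τ : K →+* K) := by
    have := (Polynomial.mem_map_range (algebraMap F K)
      (p := ∏ τ : K ≃ₐ[F] K, g.map (τ : K →+* K))).2 (by
        intro n
        change _ ∈ Set.range _
        rw [IsGalois.mem_range_algebraMap_iff_fixed]
        intro σ
        have h1 : (∏ τ : K ≃ₐ[F] K, g.map (τ : K →+* K)).map (σ : K →+* K) =
            ∏ τ : K ≃ₐ[F] K, g.map (τ : K →+* K) := by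
          rw [Polynomial.map_prod]
          refine Fintype.prod_equiv (Equiv.mulLeft σ) _ _ (fun τ => ?_)
          rw [Polynomial.map_map]
          rfl
        conv_rhs => rw [← h1]
        rw [coeff_map]
        rfl)
    obtain ⟨G, hG⟩ := this
    exact ⟨G, hG⟩
  obtain ⟨G, hG⟩ := hfix
  rw [← hG]
  have : f ∣ G := by
    by_contra hn
    apply aux_not_dvd hfi hg hgf hn
    rw [hG]
    have := Finset.dvd_prod_of_mem (fun τ : K ≃ₐ[F] K => g.map (τ : K →+* K))
      (Finset.mem_univ 1)
    refine dvd_trans ?_ this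
    have : (((1 : K ≃ₐ[F] K) : K →+* K)) = RingHom.id K := rfl
    simp [this]
  exact Polynomial.map_dvd _ this

theorem aux_twist (τ : K ≃ₐ[F] K) (g p : K[X]) :
    emultiplicity (g.map (τ : K →+* K)) (p.map (τ : K →+* K)) = emultiplicity g p :=
  emultiplicity_map_eq (Polynomial.mapEquiv (τ : K ≃+* K))

theorem aux_irr (τ : K ≃ₐ[F] K) {g : K[X]} (hg : Irreducible g) :
    Irreducible (g.map (τ : K →+* K)) :=
  (MulEquiv.irreducible_iff (Polynomial.mapEquiv (τ : K ≃+* K))).2 hg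

theorem aux_dvd (τ : K ≃ₐ[F] K) {f : F[X]} {g : K[X]} (hgf : g ∣ f.map (algebraMap F K)) :
    g.map (τ : K →+* K) ∣ f.map (algebraMap F K) := by
  have := Polynomial.map_dvd (τ : K →+* K) hgf
  rw [Polynomial.map_map] at this
  have h2 : (τ : K →+* K).comp (algebraMap F K) = algebraMap F K := by
    ext x; simp
  rwa [h2] at this

theorem aux_sum [Fintype F] [IsGalois F K] {c : ℕ} (A : Matrix (Fin c) (Fin c) K)
    {f : F[X]} (hfi : Irreducible f) (hs : f.Separable) {g : K[X]}
    (hg : Irreducible g) (hgf : g ∣ f.map (algebraMap F K)) :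
    multiplicity f (LinearMap.charpoly ((A.mulVecLin).restrictScalars F)) =
      ∑ τ : K ≃ₐ[F] K, multiplicity (g.map (τ : K →+* K)) (LinearMap.charpoly A.mulVecLin) := by
  have h0 : (LinearMap.charpoly ((A.mulVecLin).restrictScalars F)) ≠ 0 :=
    (LinearMap.charpoly_monic _).ne_zero
  have h0' : (LinearMap.charpoly A.mulVecLin) ≠ 0 :=
    (LinearMap.charpoly_monic _).ne_zero
  have h1 := aux_mult hfi hs hg hgf h0
  rw [aux_charpoly, Finset.emultiplicity_prod hg.prime,
    (FiniteMultiplicity.of_prime_left hfi.prime h0).emultiplicity_eq_multiplicity] at h1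
  have h2 : ∀ τ : K ≃ₐ[F] K, emultiplicity g ((LinearMap.charpoly A.mulVecLin).map (τ : K →+* K))
      = (multiplicity (g.map ((τ⁻¹ : K ≃ₐ[F] K) : K →+* K)) (LinearMap.charpoly A.mulVecLin) : ℕ) := by
    intro τ
    rw [← FiniteMultiplicity.emultiplicity_eq_multiplicity
      (FiniteMultiplicity.of_prime_left (aux_irr _ hg).prime h0'), ← aux_twist τ (g.map _),
      Polynomial.map_map]
    congr 1
    have : (τ : K →+* K).comp ((τ⁻¹ : K ≃ₐ[F] K) : K →+* K) = RingHom.id K := by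
      ext x
      exact τ.apply_symm_apply x
    rw [this, Polynomial.map_id]
  simp_rw [h2] at h1
  have h3 : (∑ τ : K ≃ₐ[F] K,
      multiplicity (g.map ((τ⁻¹ : K ≃ₐ[F] K) : K →+* K)) (LinearMap.charpoly A.mulVecLin)) =
      multiplicity f (LinearMap.charpoly ((A.mulVecLin).restrictScalars F)) := by
    exact_mod_cast h1
  rw [← h3]
  exact Fintype.sum_equiv (Equiv.inv _) _ _ (fun τ => rfl)

end helpers

theorem stmt10 (q b c : ℕ) (hq : IsPrimePow q) (hb : 0 < b) (hc : 0 < c)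
    (F K : Type*) [Field F] [Fintype F] (hF : Fintype.card F = q)
    [Field K] [Algebra F K] [FiniteDimensional F K] (hK : Module.finrank F K = b)
    (A : Matrix (Fin c) (Fin c) K) (f : Polynomial F) (hfm : f.Monic) (hfi : Irreducible f)
    (hfdvd : f ∣ LinearMap.charpoly ((A.mulVecLin).restrictScalars F)) :
    IsPrimaryCyclic ((A.mulVecLin).restrictScalars F) f ↔
      b ∣ f.natDegree ∧ ∃ g : Polynomial K,
        g.Monic ∧ Irreducible g ∧ g.natDegree = f.natDegree / b ∧
        g ∣ f.map (algebraMap F K) ∧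
        IsPrimaryCyclic A.mulVecLin g ∧
        ∀ τ : K ≃ₐ[F] K, τ ≠ 1 →
          g.map (τ : K →+* K) ≠ g ∧
          ¬ g.map (τ : K →+* K) ∣ LinearMap.charpoly A.mulVecLin := by
  classical
  have : Finite K := Module.finite_of_finite F
  have hcard : Fintype.card (K ≃ₐ[F] K) = b := by
    rw [← Nat.card_eq_fintype_card, IsGalois.card_aut_eq_finrank, hK]
  have hs : f.Separable := PerfectField.separable_of_irreducible hfi
  set Y := A.mulVecLin with hY
  set Z := Y.restrictScalars F with hZ
  have hmap1 : ∀ g : K[X], g.map ((1 : K ≃ₐ[F] K) : K →+* K) = g := by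
    intro g
    have : (((1 : K ≃ₐ[F] K) : K →+* K)) = RingHom.id K := rfl
    rw [this, Polynomial.map_id]
  have hZ0 : minpoly F Z ≠ 0 := minpoly.ne_zero (Algebra.IsIntegral.isIntegral Z)
  have hY0 : minpoly K Y ≠ 0 := minpoly.ne_zero (Algebra.IsIntegral.isIntegral Y)
  have hcZ0 : Z.charpoly ≠ 0 := (LinearMap.charpoly_monic _).ne_zero
  have hcY0 : Y.charpoly ≠ 0 := (LinearMap.charpoly_monic _).ne_zero
  have fmF : ∀ {h : F[X]}, h ≠ 0 → FiniteMultiplicity f h :=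
    fun h => FiniteMultiplicity.of_prime_left hfi.prime h
  have fmK : ∀ {g h : K[X]}, Irreducible g → h ≠ 0 → FiniteMultiplicity g h :=
    fun hg h => FiniteMultiplicity.of_prime_left hg.prime h
  unfold IsPrimaryCyclic
  constructor
  · rintro ⟨hpos, heq⟩
    -- find `g`
    have hex : ∃ p : K[X], Irreducible p ∧ p ∣ f.map (algebraMap F K) ∧
        multiplicity f Z.charpoly ≤ multiplicity p (minpoly K Y) := by
      by_contra hcon
      push Not at hcon
      obtain ⟨k, hk⟩ : ∃ k, multiplicity f (minpoly F Z) = k + 1 :=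
        ⟨multiplicity f (minpoly F Z) - 1, by omega⟩
      obtain ⟨h', hh', hn⟩ := (fmF hZ0).exists_eq_pow_mul_and_not_dvd
      rw [hk] at hh'
      have hd0 : minpoly K Y ∣ (minpoly F Z).map (algebraMap F K) :=
        (aux_minpoly_dvd Y _).1 dvd_rfl
      have hd : minpoly K Y ∣ (f ^ k * h').map (algebraMap F K) := by
        rw [UniqueFactorizationMonoid.dvd_iff_emultiplicity_le hY0]
        intro p hp
        have hd1 := (UniqueFactorizationMonoid.dvd_iff_emultiplicity_le hY0).1 hd0 p hp
        by_cases hpf : p ∣ f.map (algebraMap F K)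
        · have h1 := hcon p hp.irreducible hpf
          rw [(fmK hp.irreducible hY0).emultiplicity_eq_multiplicity,
            ]
          have h2 : f ^ k * h' ≠ 0 := by
            rintro h2
            apply hZ0
            rw [hh', pow_succ, mul_right_comm, h2, zero_mul]
          rw [aux_mult hfi hs hp.irreducible hpf h2]
          refine le_trans ?_ (le_emultiplicity_of_pow_dvd (k := k) (Dvd.intro _ rfl))
          have : multiplicity p (minpoly K Y) ≤ k := by omega
          exact_mod_cast this
        · refine hd1.trans ?_
          rw [hh', pow_succ, mul_right_comm, Polynomial.map_mul _ (q := f)]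
          rw [emultiplicity_mul hp, emultiplicity_eq_zero.2 hpf, add_zero]
      have hd2 := (aux_minpoly_dvd Y _).2 hd
      have h3 : f ^ (k + 1) ∣ f ^ k * h' := by
        refine dvd_trans ?_ hd2
        rw [← hk]; exact pow_multiplicity_dvd _ _
      rw [pow_succ] at h3
      exact hn ((mul_dvd_mul_iff_left (pow_ne_zero k hfi.ne_zero)).1 h3)
    obtain ⟨p, hp, hpf, hple⟩ := hex
    obtain ⟨g, hgm, hgp⟩ : ∃ g : K[X], g.Monic ∧ Associated p g :=
      ⟨_, monic_mul_leadingCoeff_inv hp.ne_zero,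
        associated_mul_unit_right _ _ (by simpa using hp.ne_zero)⟩
    have hg : Irreducible g := hgp.irreducible hp
    have hgf : g ∣ f.map (algebraMap F K) := hgp.symm.dvd.trans hpf
    have hgle : multiplicity f Z.charpoly ≤ multiplicity g (minpoly K Y) := by
      apply (fmK hg hY0).le_multiplicity_of_pow_dvd
      exact ((hgp.pow_pow (n := _)).symm.dvd).trans (pow_dvd_of_le_multiplicity hple)
    have hmc : multiplicity g (minpoly K Y) ≤ multiplicity g Y.charpoly :=
      (fmK hg hcY0).le_multiplicity_of_pow_dvd
        ((pow_multiplicity_dvd _ _).trans (LinearMap.minpoly_dvd_charpoly Y))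
    have hsum := aux_sum A hfi hs hg hgf
    rw [← hY, ← hZ, ← Finset.add_sum_erase _ _ (Finset.mem_univ (1 : K ≃ₐ[F] K)), hmap1] at hsum
    have hz : ∀ τ : K ≃ₐ[F] K, τ ≠ 1 → ¬ g.map (τ : K →+* K) ∣ Y.charpoly := by
      intro τ hτ
      rw [← multiplicity_eq_zero]
      have : ∑ τ ∈ Finset.univ.erase (1 : K ≃ₐ[F] K),
        multiplicity (g.map (τ : K →+* K)) Y.charpoly = 0 := by omega
      exact Finset.sum_eq_zero_iff.1 this τ (by simp [hτ])
    have hgd : g ∣ Y.charpoly := dvd_of_multiplicity_pos (by omega)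
    have hne : ∀ τ : K ≃ₐ[F] K, τ ≠ 1 → g.map (τ : K →+* K) ≠ g := by
      intro τ hτ h
      apply hz τ hτ
      rw [h]; exact hgd
    have hfprod : f.map (algebraMap F K) = ∏ τ : K ≃ₐ[F] K, g.map (τ : K →+* K) := by
      refine eq_of_monic_of_associated (hfm.map _)
        (monic_prod_of_monic _ _ (fun τ _ => hgm.map _)) ?_
      refine associated_of_dvd_dvd (aux_prod_s10 hfi hg hgf) ?_
      refine Finset.prod_dvd_of_coprime ?_ (fun τ _ => aux_dvd τ hgf)
      intro τ _ σ _ hτσ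
      refine ((aux_irr τ hg).coprime_iff_not_dvd).2 (fun hd => ?_)
      have h1 : g.map (τ : K →+* K) = g.map (σ : K →+* K) :=
        eq_of_monic_of_associated (hgm.map _) (hgm.map _)
          ((aux_irr τ hg).associated_of_dvd (aux_irr σ hg) hd)
      apply hne (σ⁻¹ * τ) (fun h => hτσ (inv_mul_eq_one.1 h).symm)
      have h2 := congrArg (Polynomial.map ((σ⁻¹ : K ≃ₐ[F] K) : K →+* K)) h1
      rw [Polynomial.map_map, Polynomial.map_map] at h2
      have h3 : ((σ⁻¹ : K ≃ₐ[F] K) : K →+* K).comp (σ : K →+* K) = RingHom.id K := by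
        ext x
        exact σ.symm_apply_apply x
      rw [h3, Polynomial.map_id] at h2
      exact h2
    have hdeg : f.natDegree = b * g.natDegree := by
      have h1 := congrArg natDegree hfprod
      rw [natDegree_map, natDegree_prod_of_monic _ _ (fun τ _ => hgm.map _)] at h1
      simpa [hcard] using h1
    refine ⟨⟨_, hdeg⟩, g, hgm, hg, ?_, hgf, ⟨by omega, by omega⟩, fun τ hτ => ⟨hne τ hτ, hz τ hτ⟩⟩
    rw [hdeg, Nat.mul_div_cancel_left _ hb]
  · rintro ⟨-, g, hgm, hg, -, hgf, ⟨hpos, heq⟩, hτ⟩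
    have hsum := aux_sum A hfi hs hg hgf
    rw [← hY, ← hZ, ← Finset.add_sum_erase _ _ (Finset.mem_univ (1 : K ≃ₐ[F] K)), hmap1,
      Finset.sum_eq_zero (fun τ h => multiplicity_eq_zero.2 (hτ τ (Finset.ne_of_mem_erase h)).2),
      add_zero] at hsum
    refine ⟨by omega, le_antisymm ?_ ?_⟩
    · rw [hsum, heq]
      apply (fmF hZ0).le_multiplicity_of_le_emultiplicity
      rw [← aux_mult hfi hs hg hgf hZ0, ← (fmK hg hY0).emultiplicity_eq_multiplicity]
      exact emultiplicity_le_emultiplicity_of_dvd_right ((aux_minpoly_dvd Y _).1 dvd_rfl)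
    · exact (fmF hcZ0).le_multiplicity_of_pow_dvd
        ((pow_multiplicity_dvd _ _).trans (LinearMap.minpoly_dvd_charpoly Z))
end

section
/- Let c \ge 2 and b \ge 1 be integers and q a prime power, and let N(c,q,b) := {X \in GL(c,K) : there exist an integer r with c/2 < r \le c and a monic irreducible f \in F[t] of degree br such that X_{bc,q} is f-primary cyclic}. Then \log 2 - 1/(c+1) - 2/q^{bc/4} < |N(c,q,b)|/|GL(c,K)| \le \log 2 + 1/c, where q^{bc/4} denotes the real number q raised to the power bc/4 and \log denotes the natural logarithm. -/
open Matrix Polynomial Module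

lemma exists_equiv_comp {K V W : Type*} [Field K] [AddCommGroup V] [Module K V]
    [FiniteDimensional K V] [AddCommGroup W] [Module K W] (φ ψ : V →ₗ[K] W)
    (hφ : Function.Surjective φ) (hψ : Function.Surjective ψ) :
    ∃ e : V ≃ₗ[K] V, ∀ x, φ (e x) = ψ x := by
  obtain ⟨s, hs⟩ := φ.exists_rightInverse_of_surjective (LinearMap.range_eq_top.2 hφ)
  obtain ⟨t, ht⟩ := ψ.exists_rightInverse_of_surjective (LinearMap.range_eq_top.2 hψ)
  have hs' : ∀ x, φ (s x) = x := fun x => LinearMap.congr_fun hs x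
  have ht' : ∀ x, ψ (t x) = x := fun x => LinearMap.congr_fun ht x
  have hk : finrank K (LinearMap.ker ψ) = finrank K (LinearMap.ker φ) := by
    have h1 := φ.finrank_range_add_finrank_ker
    have h2 := ψ.finrank_range_add_finrank_ker
    rw [LinearMap.range_eq_top.2 hφ] at h1
    rw [LinearMap.range_eq_top.2 hψ] at h2
    omega
  let κ := LinearEquiv.ofFinrankEq _ _ hk
  let p : V →ₗ[K] LinearMap.ker ψ :=
    LinearMap.codRestrict _ (LinearMap.id - t ∘ₗ ψ) (by intro x; simp [ht'])
  let e0 : V →ₗ[K] V := s ∘ₗ ψ + (LinearMap.ker φ).subtype ∘ₗ κ.toLinearMap ∘ₗ p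
  have he0 : ∀ x, φ (e0 x) = ψ x := by
    intro x
    have : φ (κ (p x) : V) = 0 := (κ (p x)).2
    simp [e0, hs', this]
  have hinj : Function.Injective e0 := by
    rw [← LinearMap.ker_eq_bot, LinearMap.ker_eq_bot']
    intro x hx
    have h1 : ψ x = 0 := by rw [← he0 x, hx, map_zero]
    have h2 : κ (p x) = 0 := by
      apply Subtype.ext
      simpa [e0, h1] using hx
    have h3 : p x = 0 := by simpa using h2
    have h4 : ((p x : LinearMap.ker ψ) : V) = 0 := by rw [h3]; rfl
    simpa [p, h1] using h4
  exact ⟨LinearEquiv.ofInjectiveEndo e0 hinj, he0⟩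

lemma exists_GL_mulVec {K L : Type*} [Field K] [Field L] [Algebra K L] {c : ℕ}
    (v w : Fin c → L) (hv : Submodule.span K (Set.range v) = ⊤)
    (hw : Submodule.span K (Set.range w) = ⊤) :
    ∃ X : GL (Fin c) K, ((X : Matrix (Fin c) (Fin c) K).map (algebraMap K L)) *ᵥ v = w := by
  have surj : ∀ u : Fin c → L, Submodule.span K (Set.range u) = ⊤ →
      Function.Surjective (Fintype.linearCombination K u) := by
    intro u hu
    rw [← LinearMap.range_eq_top, Fintype.range_linearCombination, hu]
  obtain ⟨e, he⟩ := exists_equiv_comp _ _ (surj v hv) (surj w hw)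
  have hu : IsUnit (LinearMap.toMatrix' (e : (Fin c → K) →ₗ[K] (Fin c → K)))ᵀ := by
    rw [Matrix.isUnit_transpose]
    rw [LinearMap.isUnit_toMatrix'_iff]
    exact (Module.End.isUnit_iff _).2 e.bijective
  refine ⟨hu.unit, ?_⟩
  funext i
  have := he (Pi.single i 1)
  rw [Fintype.linearCombination_apply_single, one_smul, Fintype.linearCombination_apply] at this
  rw [← this]
  simp [Matrix.mulVec, dotProduct, LinearMap.toMatrix'_apply, Algebra.smul_def]

lemma map_GL_mul {K L : Type*} [Field K] [Field L] [Algebra K L] {c : ℕ} (X Y : GL (Fin c) K)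
    (v : Fin c → L) :
    (((X * Y : GL (Fin c) K) : Matrix (Fin c) (Fin c) K).map (algebraMap K L)) *ᵥ v =
    ((X : Matrix (Fin c) (Fin c) K).map (algebraMap K L)) *ᵥ
      (((Y : Matrix (Fin c) (Fin c) K).map (algebraMap K L)) *ᵥ v) := by
  rw [Matrix.mulVec_mulVec, Units.val_mul, Matrix.map_mul]

lemma map_GL_one {K L : Type*} [Field K] [Field L] [Algebra K L] {c : ℕ} 
    (v : Fin c → L) :
    (((1 : GL (Fin c) K) : Matrix (Fin c) (Fin c) K).map (algebraMap K L)) *ᵥ v = v := by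
  simp

lemma span_GL {K L : Type*} [Field K] [Field L] [Algebra K L] {c : ℕ} (X : GL (Fin c) K)
    (v : Fin c → L) (hv : Submodule.span K (Set.range v) = ⊤) :
    Submodule.span K (Set.range
      (((X : Matrix (Fin c) (Fin c) K).map (algebraMap K L)) *ᵥ v)) = ⊤ := by
  rw [eq_top_iff, ← hv, Submodule.span_le]
  rintro _ ⟨i, rfl⟩
  have h : v = ((X⁻¹ : GL (Fin c) K) : Matrix (Fin c) (Fin c) K).map (algebraMap K L) *ᵥ
    (((X : Matrix (Fin c) (Fin c) K).map (algebraMap K L)) *ᵥ v) := by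
    rw [← map_GL_mul, inv_mul_cancel, map_GL_one]
  set w := ((X : Matrix (Fin c) (Fin c) K).map (algebraMap K L)) *ᵥ v
  rw [h]
  simp only [Matrix.mulVec, dotProduct, Matrix.map_apply, ← Algebra.smul_def]
  exact Submodule.sum_mem _ fun j _ => Submodule.smul_mem _ _ (Submodule.subset_span ⟨j, rfl⟩)

open Classical in
lemma card_transport {K L : Type*} [Field K] [Fintype K] [Field L] [Algebra K L] {c : ℕ}
    (v w v' w' : Fin c → L) (hv : Submodule.span K (Set.range v) = ⊤)
    (hw : Submodule.span K (Set.range w) = ⊤) (hv' : Submodule.span K (Set.range v') = ⊤)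
    (hw' : Submodule.span K (Set.range w') = ⊤) :
    (Finset.univ.filter fun X : GL (Fin c) K =>
      ((X : Matrix (Fin c) (Fin c) K).map (algebraMap K L)) *ᵥ v = w).card =
    (Finset.univ.filter fun X : GL (Fin c) K =>
      ((X : Matrix (Fin c) (Fin c) K).map (algebraMap K L)) *ᵥ v' = w').card := by
  obtain ⟨g, hg⟩ := exists_GL_mulVec v' v hv' hv
  obtain ⟨h, hh⟩ := exists_GL_mulVec w w' hw hw'
  have hg' := congrArg (fun u => ((g⁻¹ : GL (Fin c) K) : Matrix (Fin c) (Fin c) K).map (algebraMap K L) *ᵥ u) hg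
  have hh' := congrArg (fun u => ((h⁻¹ : GL (Fin c) K) : Matrix (Fin c) (Fin c) K).map (algebraMap K L) *ᵥ u) hh
  simp only [← map_GL_mul, inv_mul_cancel, map_GL_one] at hg' hh'
  apply Finset.card_nbij' (fun X => h * X * g) (fun Y => h⁻¹ * Y * g⁻¹)
  · intro X hX
    simp only [Finset.coe_filter, Finset.mem_univ, true_and, Set.mem_ofPred_eq] at hX ⊢
    rw [map_GL_mul, map_GL_mul, hg, hX, hh]
  · intro X hX
    simp only [Finset.coe_filter, Finset.mem_univ, true_and, Set.mem_ofPred_eq] at hX ⊢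
    rw [map_GL_mul, map_GL_mul, ← hg', hX, ← hh']
  · intro X _; group
  · intro X _; group

lemma eigen_span {K L : Type*} [Field K] [Fintype K] [Field L] [Algebra K L] [FiniteDimensional K L]
    {c : ℕ} (a : L) (ha : (minpoly K a).natDegree = finrank K L) (X : Matrix (Fin c) (Fin c) K)
    (v : Fin c → L) (hv : v ≠ 0) (h : (X.map (algebraMap K L)) *ᵥ v = a • v) :
    Submodule.span K (Set.range v) = ⊤ := by
  set W := Submodule.span K (Set.range v) with hW
  have haW : ∀ x ∈ W, a * x ∈ W := by
    intro x hx
    induction hx using Submodule.span_induction with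
    | mem x hx =>
      obtain ⟨i, rfl⟩ := hx
      have := congrFun h i
      simp only [Pi.smul_apply, smul_eq_mul] at this
      rw [← this]
      simp only [Matrix.mulVec, dotProduct, Matrix.map_apply, ← Algebra.smul_def]
      exact Submodule.sum_mem _ fun j _ => Submodule.smul_mem _ _ (Submodule.subset_span ⟨j, rfl⟩)
    | zero => simp
    | add x y _ _ hx hy => rw [mul_add]; exact W.add_mem hx hy
    | smul k x _ hx => rw [mul_smul_comm]; exact W.smul_mem k hx
  have htop : Algebra.adjoin K {a} = ⊤ := by
    have h1 : IntermediateField.adjoin K {a} = ⊤ := by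
      rw [← IntermediateField.finrank_eq_one_iff_eq_top]
      have h2 := IntermediateField.adjoin.finrank (K := K) (Algebra.IsIntegral.isIntegral (R := K) a)
      have h3 := Module.finrank_mul_finrank K (IntermediateField.adjoin K {a}) L
      have h4 : 0 < finrank K L := Module.finrank_pos
      rw [h2, ha] at h3
      exact Nat.eq_of_mul_eq_mul_left h4 (by rw [h3, mul_one])
    have h5 := IntermediateField.adjoin_simple_toSubalgebra_of_isAlgebraic (Algebra.IsAlgebraic.isAlgebraic (R := K) a)
    rw [← h5, h1]; rfl
  have hL : ∀ l : L, ∀ x ∈ W, l * x ∈ W := by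
    intro l
    have hl : l ∈ Algebra.adjoin K {a} := by rw [htop]; trivial
    induction hl using Algebra.adjoin_induction with
    | mem y hy => rw [Set.mem_singleton_iff.1 hy]; exact haW
    | algebraMap k => intro x hx; rw [← Algebra.smul_def]; exact W.smul_mem k hx
    | add y z _ _ hy hz => intro x hx; rw [add_mul]; exact W.add_mem (hy x hx) (hz x hx)
    | mul y z _ _ hy hz => intro x hx; rw [mul_assoc]; exact hy _ (hz x hx)
  obtain ⟨i, hi⟩ := Function.ne_iff.1 hv
  rw [eq_top_iff]
  intro l _
  have := hL (l / v i) (v i) (Submodule.subset_span ⟨i, rfl⟩)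
  rwa [div_mul_cancel₀ _ hi] at this

lemma rootMult_le_one {K L : Type*} [Field K] [Fintype K] [Field L] [Algebra K L]
    [FiniteDimensional K L] (a : L) (p : K[X]) (hp : p.Monic)
    (hd : p.natDegree < 2 * (minpoly K a).natDegree) :
    (p.map (algebraMap K L)).rootMultiplicity a ≤ 1 := by
  by_cases hr : aeval a p = 0
  · obtain ⟨h, rfl⟩ := minpoly.dvd K a hr
    have hg : (minpoly K a).Monic := minpoly.monic (Algebra.IsIntegral.isIntegral a)
    have hh : h.Monic := hg.of_mul_monic_left hp
    have hne : ((minpoly K a * h).map (algebraMap K L)) ≠ 0 := (hp.map _).ne_zero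
    rw [Polynomial.map_mul] at hne ⊢
    rw [rootMultiplicity_mul hne]
    have h1 : ((minpoly K a).map (algebraMap K L)).rootMultiplicity a ≤ 1 :=
      rootMultiplicity_le_one_of_separable (Polynomial.Separable.map (show (minpoly K a).Separable from
        Algebra.IsSeparable.isSeparable K a)) a
    have h2 : (h.map (algebraMap K L)).rootMultiplicity a = 0 := by
      apply rootMultiplicity_eq_zero
      intro h0
      have h3 : aeval a h = 0 := by rwa [IsRoot.def, eval_map_algebraMap] at h0
      have h4 := natDegree_le_of_dvd (minpoly.dvd K a h3) hh.ne_zero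
      rw [hg.natDegree_mul hh] at hd
      omega
    omega
  · rw [rootMultiplicity_eq_zero]
    · omega
    · rwa [IsRoot.def, eval_map_algebraMap]

lemma root_iff_eigenvalue {K L : Type*} [Field K] [Field L] [Algebra K L] {c : ℕ} (a : L)
    (X : Matrix (Fin c) (Fin c) K) :
    aeval a X.charpoly = 0 ↔
    Module.End.HasEigenvalue (Matrix.toLin' (X.map (algebraMap K L))) a := by
  rw [Module.End.hasEigenvalue_iff_isRoot_charpoly, Matrix.charpoly_toLin', Matrix.charpoly_map, IsRoot.def,
    eval_map_algebraMap]

open Classical in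
lemma eig_count {K L : Type*} [Field K] [Fintype K] [Field L] [Fintype L] [Algebra K L]
    [FiniteDimensional K L] {c : ℕ} (a : L) (ha : (minpoly K a).natDegree = finrank K L)
    (hc : c < 2 * finrank K L) (X : Matrix (Fin c) (Fin c) K) (hX : aeval a X.charpoly = 0) :
    (Finset.univ.filter fun v : Fin c → L => Submodule.span K (Set.range v) = ⊤ ∧
      (X.map (algebraMap K L)) *ᵥ v = a • v).card = Fintype.card L - 1 := by
  set T := Matrix.toLin' (X.map (algebraMap K L)) with hT
  have h1 : finrank L (Module.End.eigenspace T a) = 1 := by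
    apply le_antisymm
    · refine (LinearMap.finrank_eigenspace_le T a).trans ?_
      rw [hT, Matrix.charpoly_toLin', Matrix.charpoly_map]
      apply rootMult_le_one a _ (Matrix.charpoly_monic X)
      rw [Matrix.charpoly_natDegree_eq_dim, ha]
      simpa using hc
    · rw [Nat.succ_le_iff, Module.finrank_pos_iff]
      rw [Submodule.nontrivial_iff_ne_bot]
      exact (root_iff_eigenvalue a X).1 hX
  have h2 : Fintype.card (Module.End.eigenspace T a) = Fintype.card L := by
    rw [Module.card_eq_pow_finrank (K := L), h1, pow_one]
  have h3 : (Finset.univ.filter fun v : Fin c → L => Submodule.span K (Set.range v) = ⊤ ∧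
      (X.map (algebraMap K L)) *ᵥ v = a • v) =
      (Finset.univ.filter fun v : Fin c → L => v ∈ Module.End.eigenspace T a).erase 0 := by
    ext v
    simp only [Finset.mem_filter, Finset.mem_univ, true_and, Finset.mem_erase,
      Module.End.mem_eigenspace_iff, hT, Matrix.toLin'_apply]
    constructor
    · rintro ⟨hs, h⟩
      refine ⟨?_, h⟩
      rintro rfl
      have : Submodule.span K (Set.range (0 : Fin c → L)) = ⊥ := by
        rw [Submodule.span_eq_bot]
        rintro _ ⟨i, rfl⟩
        rfl
      rw [this] at hs
      exact bot_ne_top hs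
    · rintro ⟨h0, h⟩
      exact ⟨eigen_span a ha X v h0 h, h⟩
  rw [h3, Finset.card_erase_of_mem (by simp), ← h2, Fintype.card_subtype]

open Classical in
lemma count_eig {K L : Type*} [Field K] [Fintype K] [Field L] [Fintype L] [Algebra K L]
    [FiniteDimensional K L] {c : ℕ} (a : L) (ha0 : a ≠ 0)
    (ha : (minpoly K a).natDegree = finrank K L)
    (hc : c < 2 * finrank K L) (hc' : finrank K L ≤ c) :
    (Finset.univ.filter fun X : GL (Fin c) K =>
      aeval a (X : Matrix (Fin c) (Fin c) K).charpoly = 0).card * (Fintype.card L - 1) =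
      Fintype.card (GL (Fin c) K) := by
  set V := Finset.univ.filter fun v : Fin c → L => Submodule.span K (Set.range v) = ⊤ with hV
  have memV : ∀ v, v ∈ V ↔ Submodule.span K (Set.range v) = ⊤ := by intro v; simp [hV]
  obtain ⟨v0, hv0⟩ : ∃ v0, v0 ∈ V := by
    let B := Module.finBasis K L
    let f : Fin c → L := fun i => if h : i.1 < finrank K L then B ⟨i, h⟩ else 0
    refine ⟨f, (memV _).2 ?_⟩
    rw [eq_top_iff, ← B.span_eq, Submodule.span_le]
    rintro _ ⟨i, rfl⟩
    apply Submodule.subset_span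
    refine ⟨⟨i, i.2.trans_le hc'⟩, ?_⟩
    simp [f]
  set n0 := (Finset.univ.filter fun X : GL (Fin c) K =>
      ((X : Matrix (Fin c) (Fin c) K).map (algebraMap K L)) *ᵥ v0 = v0).card with hn0
  have key1 : Fintype.card (GL (Fin c) K) * 1 = V.card * n0 := by
    rw [← Finset.card_univ]
    apply Finset.card_mul_eq_card_mul (fun (X : GL (Fin c) K) v =>
      ((X : Matrix (Fin c) (Fin c) K).map (algebraMap K L)) *ᵥ v0 = v)
    · intro X _
      rw [Finset.card_eq_one]
      refine ⟨((X : Matrix (Fin c) (Fin c) K).map (algebraMap K L)) *ᵥ v0, ?_⟩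
      ext v
      simp only [Finset.mem_bipartiteAbove, Finset.mem_singleton]
      constructor
      · rintro ⟨_, h⟩; exact h.symm
      · rintro rfl; exact ⟨(memV _).2 (span_GL X v0 ((memV _).1 hv0)), rfl⟩
    · intro w hw
      rw [hn0]
      apply card_transport <;> rw [← memV] <;> assumption
  have key2 : (Finset.univ.filter fun X : GL (Fin c) K =>
      aeval a (X : Matrix (Fin c) (Fin c) K).charpoly = 0).card * (Fintype.card L - 1) =
      V.card * n0 := by
    apply Finset.card_mul_eq_card_mul (fun (X : GL (Fin c) K) v =>
      ((X : Matrix (Fin c) (Fin c) K).map (algebraMap K L)) *ᵥ v = a • v)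
    · intro X hX
      rw [← eig_count a ha hc (X : Matrix (Fin c) (Fin c) K) (by simpa using hX)]
      congr 1
      ext v
      simp [Finset.mem_bipartiteAbove, hV]
    · intro v hv
      have hav : Submodule.span K (Set.range (a • v)) = ⊤ := by
        have h1 := (memV v).1 hv
        rw [eq_top_iff]
        intro l _
        have h2 : a⁻¹ * l ∈ Submodule.span K (Set.range v) := by rw [h1]; trivial
        have h3 := Submodule.mem_map_of_mem (f := LinearMap.mulLeft K a) h2
        rw [Submodule.map_span, ← Set.range_comp] at h3
        simp only [LinearMap.mulLeft_apply, mul_inv_cancel_left₀ ha0] at h3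
        exact h3
      rw [hn0, ← card_transport v (a • v) v0 v0 ((memV _).1 hv) hav ((memV _).1 hv0) ((memV _).1 hv0)]
      congr 1
      ext X
      simp only [Finset.mem_bipartiteBelow, Finset.mem_filter, Finset.mem_univ, true_and,
        and_iff_right_iff_imp]
      intro h
      rw [root_iff_eigenvalue]
      apply Module.End.hasEigenvalue_of_hasEigenvector (x := v)
      rw [Module.End.hasEigenvector_iff, Module.End.mem_eigenspace_iff]
      refine ⟨by rw [Matrix.toLin'_apply]; exact h, ?_⟩
      rintro rfl
      have h5 : Submodule.span K (Set.range (0 : Fin c → L)) = ⊥ := by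
        rw [Submodule.span_eq_bot]
        rintro _ ⟨i, rfl⟩
        rfl
      have h4 := (memV _).1 hv
      rw [h5] at h4
      exact bot_ne_top h4
  rw [key2, ← key1, mul_one]

lemma primaryCyclic_iff {E V : Type*} [Field E] [AddCommGroup V] [Module E V]
    [FiniteDimensional E V] (T : V →ₗ[E] V) (f : Polynomial E) (hf : f.Monic)
    (hi : Irreducible f) (hd : finrank E V < 2 * f.natDegree) :
    IsPrimaryCyclic T f ↔ f ∣ minpoly E T := by
  have hm0 : minpoly E T ≠ 0 := minpoly.ne_zero (Algebra.IsIntegral.isIntegral T)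
  have fin : ∀ p : E[X], p ≠ 0 → FiniteMultiplicity f p := fun p hp =>
    FiniteMultiplicity.of_not_isUnit hi.not_isUnit hp
  constructor
  · rintro ⟨h0, h1⟩
    rw [h1] at h0
    exact dvd_of_multiplicity_pos h0
  · intro h
    have hc0 : T.charpoly ≠ 0 := T.charpoly_monic.ne_zero
    have hn : ¬ f ^ 2 ∣ T.charpoly := by
      intro h2
      have := natDegree_le_of_dvd h2 hc0
      rw [hf.natDegree_pow, LinearMap.charpoly_natDegree] at this
      omega
    have hmc := LinearMap.minpoly_dvd_charpoly T
    have e1 : multiplicity f T.charpoly = 1 := by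
      apply multiplicity_eq_of_dvd_of_not_dvd
      · simpa using h.trans hmc
      · simpa using hn
    have e2 : multiplicity f (minpoly E T) = 1 := by
      apply multiplicity_eq_of_dvd_of_not_dvd
      · simpa using h
      · intro h2; exact hn (h2.trans hmc)
    exact ⟨by rw [e1]; exact one_pos, by rw [e1, e2]⟩

lemma splits_of_degree {F L : Type*} [Field F] [Fintype F] [Field L] [Fintype L] [Algebra F L]
    (f : F[X]) (hi : Irreducible f) (hd : f.natDegree = finrank F L) :
    (f.map (algebraMap F L)).Splits := by
  have h1 : f ∣ X ^ Nat.card F ^ (finrank F L) - X := by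
    rw [← hi.natDegree_dvd_iff_dvd_X_pow_card_pow_sub_X, hd]
  have hcard : Nat.card F ^ (finrank F L) = Fintype.card L := by
    rw [Module.card_eq_pow_finrank (K := F) (V := L), Nat.card_eq_fintype_card]
  rw [hcard] at h1
  have h2 := Polynomial.map_dvd (algebraMap F L) h1
  have h3 : ((X ^ Fintype.card L - X : F[X]).map (algebraMap F L)) = X ^ Fintype.card L - X := by simp
  rw [h3] at h2
  refine Splits.of_dvd ?_ (FiniteField.X_pow_card_sub_X_ne_zero L Fintype.one_lt_card) h2
  rw [splits_iff_card_roots, FiniteField.roots_X_pow_card_sub_X,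
    FiniteField.X_pow_card_sub_X_natDegree_eq L Fintype.one_lt_card]
  rfl

open Classical in
lemma dvd_minpoly_iff {F K L : Type*} [Field F] [Fintype F] [Field K] [Field L] [Fintype L]
    [Algebra F K] [FiniteDimensional F K] [Algebra K L] [Algebra F L] [IsScalarTower F K L] {c : ℕ}
    (X : Matrix (Fin c) (Fin c) K) (f : F[X]) (hf : f.Monic) (hi : Irreducible f)
    (hd : f.natDegree = finrank F L) :
    f ∣ minpoly F (X.mulVecLin.restrictScalars F) ↔
      ∃ a : L, aeval a f = 0 ∧ aeval a X.charpoly = 0 := by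
  have hminT : ∀ p : F[X], aeval (X.mulVecLin.restrictScalars F) p =
      (aeval (Matrix.toLin' X) (p.map (algebraMap F K))).restrictScalars F := by
    intro p
    induction p using Polynomial.induction_on' with
    | add p q hp hq => simp [hp, hq]
    | monomial n r =>
      refine LinearMap.ext fun v => ?_
      have : ∀ n : ℕ, ∀ v, ((X.mulVecLin.restrictScalars F) ^ n) v = ((Matrix.toLin' X) ^ n) v := by
        intro n
        induction n with
        | zero => intro v; rfl
        | succ n ih => intro v; rw [pow_succ, pow_succ]; exact ih _
      simp only [aeval_monomial, Polynomial.map_monomial, Module.End.mul_apply, this,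
        LinearMap.restrictScalars_apply, Module.algebraMap_end_apply, algebraMap_smul]
  constructor
  · intro h
    by_contra! hno
    have hcop : IsCoprime (f.map (algebraMap F K)) X.charpoly := by
      rw [← EuclideanDomain.gcd_isUnit_iff]
      by_contra hu
      set d := EuclideanDomain.gcd (f.map (algebraMap F K)) X.charpoly with hdd
      have d1 : d ∣ f.map (algebraMap F K) := EuclideanDomain.gcd_dvd_left _ _
      have d2 : d ∣ X.charpoly := EuclideanDomain.gcd_dvd_right _ _
      have hs : (d.map (algebraMap K L)).Splits := by
        refine Splits.of_dvd (splits_of_degree f hi hd) (hf.map _).ne_zero ?_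
        rw [IsScalarTower.algebraMap_eq F K L, ← Polynomial.map_map]
        exact Polynomial.map_dvd _ d1
      have hd0 : d ≠ 0 := by
        intro h0
        rw [h0, zero_dvd_iff] at d1
        exact (hf.map _).ne_zero d1
      obtain ⟨a, ha⟩ := hs.exists_eval_eq_zero (by
        rw [degree_map]
        intro h0
        exact hu (isUnit_iff_degree_eq_zero.2 h0))
      rw [eval_map_algebraMap] at ha
      apply hno a
      · have := aeval_eq_zero_of_dvd_aeval_eq_zero d1 ha
        rwa [aeval_map_algebraMap] at this
      · exact aeval_eq_zero_of_dvd_aeval_eq_zero d2 ha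
    obtain ⟨u, v, huv⟩ := hcop
    obtain ⟨g, hg⟩ := h
    have hCH : aeval (Matrix.toLin' X) X.charpoly = 0 := by
      have := LinearMap.aeval_self_charpoly (Matrix.toLin' X)
      rwa [Matrix.charpoly_toLin'] at this
    have h1 : aeval (Matrix.toLin' X) u * aeval (Matrix.toLin' X) (f.map (algebraMap F K)) = 1 := by
      have := congrArg (aeval (Matrix.toLin' X)) huv
      simpa [hCH] using this
    have h2 : aeval (Matrix.toLin' X) (f.map (algebraMap F K)) *
        aeval (Matrix.toLin' X) (g.map (algebraMap F K)) = 0 := by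
      rw [← map_mul, ← Polynomial.map_mul, ← hg]
      have := hminT (minpoly F (X.mulVecLin.restrictScalars F))
      rw [minpoly.aeval] at this
      exact LinearMap.restrictScalars_injective F this.symm
    have h3 : aeval (Matrix.toLin' X) (g.map (algebraMap F K)) = 0 := by
      rw [← one_mul (aeval (Matrix.toLin' X) (g.map (algebraMap F K))), ← h1, mul_assoc, h2, mul_zero]
    have h4 : aeval (X.mulVecLin.restrictScalars F) g = 0 := by
      rw [hminT, h3]; rfl
    have hm0 : minpoly F (X.mulVecLin.restrictScalars F) ≠ 0 :=
      minpoly.ne_zero (Algebra.IsIntegral.isIntegral _)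
    have hg0 : g ≠ 0 := by rintro rfl; rw [mul_zero] at hg; exact hm0 hg
    have h5 := natDegree_le_of_dvd (minpoly.dvd F _ h4) hg0
    rw [hg, natDegree_mul hf.ne_zero hg0] at h5
    have := hi.natDegree_pos
    omega
  · rintro ⟨a, haf, hac⟩
    have hmin : f = minpoly F a := minpoly.eq_of_irreducible_of_monic hi haf hf
    rw [hmin]
    apply minpoly.dvd
    set m := minpoly F (X.mulVecLin.restrictScalars F) with hm
    have hm1 : aeval (Matrix.toLin' X) (m.map (algebraMap F K)) = 0 := by
      have := hminT m
      rw [hm, minpoly.aeval] at this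
      exact LinearMap.restrictScalars_injective F this.symm
    have hm2 : aeval X m = 0 := by
      have h1 := Polynomial.aeval_algHom_apply (Matrix.toLinAlgEquiv' (R := K) (n := Fin c)).toAlgHom X
        (m.map (algebraMap F K))
      have h2 : aeval X (m.map (algebraMap F K)) = 0 := by
        apply (Matrix.toLinAlgEquiv' (R := K) (n := Fin c)).injective
        rw [map_zero]
        exact h1.symm.trans hm1
      rwa [aeval_map_algebraMap] at h2
    have hm3 : aeval (X.map (algebraMap K L)) m = 0 := by
      have h1 := Polynomial.aeval_algHom_apply ((Algebra.ofId K L).mapMatrix.restrictScalars F) X m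
      rw [hm2, map_zero] at h1
      exact h1
    have hm4 : aeval (Matrix.toLin' (X.map (algebraMap K L))) (m.map (algebraMap F L)) = 0 := by
      have h1 := Polynomial.aeval_algHom_apply (Matrix.toLinAlgEquiv' (R := L) (n := Fin c)).toAlgHom
        (X.map (algebraMap K L)) (m.map (algebraMap F L))
      rw [aeval_map_algebraMap L (X.map (algebraMap K L)), hm3, map_zero] at h1
      exact h1
    have hE := (root_iff_eigenvalue a X).1 hac
    obtain ⟨v, hv⟩ := hE.exists_hasEigenvector
    have h1 := Module.End.aeval_apply_of_hasEigenvector (p := m.map (algebraMap F L)) hv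
    rw [hm4, LinearMap.zero_apply, eval_map_algebraMap] at h1
    exact (smul_eq_zero.1 h1.symm).resolve_right hv.2

lemma gen_tower {F K L : Type*} [Field F] [Fintype F] [Field K] [Field L] [Fintype L]
    [Algebra F K] [FiniteDimensional F K] [Algebra K L] [Algebra F L] [IsScalarTower F K L]
    [FiniteDimensional F L] [FiniteDimensional K L]
    (a : L) (ha : (minpoly F a).natDegree = finrank F L) :
    (minpoly K a).natDegree = finrank K L := by
  rw [← Field.primitive_element_iff_minpoly_natDegree_eq] at ha ⊢
  rw [eq_top_iff]
  intro l _
  have h1 : l ∈ IntermediateField.adjoin F {a} := by rw [ha]; trivial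
  have h2 : IntermediateField.adjoin F {a} ≤
      (IntermediateField.adjoin K {a}).restrictScalars F := by
    rw [IntermediateField.adjoin_le_iff]
    exact IntermediateField.subset_adjoin K {a}
  exact h2 h1

open Classical in
lemma root_count {F K L : Type*} [Field F] [Fintype F] [Field K] [Fintype K] [Field L] [Fintype L]
    [Algebra F K] [FiniteDimensional F K] [Algebra K L] [Algebra F L] [IsScalarTower F K L]
    [FiniteDimensional F L] [FiniteDimensional K L]
    (p : K[X]) (hp : p ≠ 0) (hd : p.natDegree < 2 * finrank K L)
    (a₀ : L) (ha : (minpoly F a₀).natDegree = finrank F L) (h0 : aeval a₀ p = 0) :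
    (Finset.univ.filter fun a : L => (minpoly F a).natDegree = finrank F L ∧
      aeval a p = 0).card = finrank K L := by
  have hK := gen_tower (K := K) a₀ ha
  have hint : ∀ a : L, IsIntegral K a := fun a => Algebra.IsIntegral.isIntegral a
  have hintF : ∀ a : L, IsIntegral F a := fun a => Algebra.IsIntegral.isIntegral a
  have h1 := card_rootSet_eq_natDegree (K := L) (p := minpoly K a₀)
    (Algebra.IsSeparable.isSeparable K a₀) (splits_of_degree _ (minpoly.irreducible (hint _)) hK)
  rw [hK] at h1
  rw [← h1, ← Set.toFinset_card]
  congr 1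
  ext a
  simp only [Finset.mem_filter, Finset.mem_univ, true_and, Set.mem_toFinset,
    mem_rootSet_of_ne (minpoly.ne_zero (hint a₀))]
  constructor
  · rintro ⟨hg, hr⟩
    have hKa := gen_tower (K := K) a hg
    by_contra hne
    have hcop : IsCoprime (minpoly K a) (minpoly K a₀) := by
      rw [(minpoly.irreducible (hint a)).coprime_iff_not_dvd]
      intro hdvd
      have := eq_of_monic_of_associated (minpoly.monic (hint a)) (minpoly.monic (hint a₀))
        ((minpoly.irreducible (hint a)).associated_of_dvd (minpoly.irreducible (hint a₀)) hdvd)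
      rw [← this, minpoly.aeval] at hne
      exact hne rfl
    have := natDegree_le_of_dvd (hcop.mul_dvd (minpoly.dvd K a hr) (minpoly.dvd K a₀ h0)) hp
    rw [(minpoly.monic (hint a)).natDegree_mul (minpoly.monic (hint a₀)), hK, hKa] at this
    omega
  · intro hr
    refine ⟨?_, aeval_eq_zero_of_dvd_aeval_eq_zero (minpoly.dvd K a₀ h0) hr⟩
    have h2 : aeval a (minpoly F a₀) = 0 := by
      have h3 : minpoly K a₀ ∣ (minpoly F a₀).map (algebraMap F K) :=
        minpoly.dvd_map_of_isScalarTower F K a₀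
      have := aeval_eq_zero_of_dvd_aeval_eq_zero h3 hr
      rwa [aeval_map_algebraMap] at this
    rw [← minpoly.eq_of_irreducible_of_monic (minpoly.irreducible (hintF a₀)) h2
      (minpoly.monic (hintF a₀)), ha]

def PCSet (F : Type*) {K : Type*} [Field F] [Field K] [Algebra F K] [FiniteDimensional F K]
    (c n : ℕ) : Set (GL (Fin c) K) :=
  {A : GL (Fin c) K | ∃ f : Polynomial F,
      f.Monic ∧ Irreducible f ∧ f.natDegree = n ∧
      IsPrimaryCyclic (((↑A : Matrix (Fin c) (Fin c) K).mulVecLin).restrictScalars F) f}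

open Classical in
lemma PCSet_count {F K L : Type*} [Field F] [Fintype F] [Field K] [Fintype K] [Field L] [Fintype L]
    [Algebra F K] [FiniteDimensional F K] [Algebra K L] [Algebra F L] [IsScalarTower F K L]
    [FiniteDimensional F L] [FiniteDimensional K L] {c : ℕ} (h2 : 2 ≤ c)
    (hc : c < 2 * finrank K L) (hc' : finrank K L ≤ c) :
    Nat.card (PCSet F (K := K) c (finrank F L)) * finrank K L * (Fintype.card L - 1) =
    (Finset.univ.filter fun a : L => (minpoly F a).natDegree = finrank F L).card *
      Nat.card (GL (Fin c) K) := by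
  have hb : 0 < finrank F K := finrank_pos
  have htow : finrank F K * finrank K L = finrank F L := finrank_mul_finrank F K L
  have hdim : finrank F (Fin c → K) < 2 * finrank F L := by
    rw [Module.finrank_pi_fintype, Finset.sum_const, Finset.card_univ, Fintype.card_fin, smul_eq_mul,
      ← htow]
    nlinarith
  have hmem : ∀ X : GL (Fin c) K, X ∈ PCSet F (K := K) c (finrank F L) ↔
      ∃ a : L, (minpoly F a).natDegree = finrank F L ∧
        aeval a (X : Matrix (Fin c) (Fin c) K).charpoly = 0 := by
    intro X
    constructor
    · rintro ⟨f, hf, hi, hd, hp⟩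
      rw [primaryCyclic_iff _ f hf hi (by rw [hd]; exact hdim),
        dvd_minpoly_iff (L := L) _ f hf hi hd] at hp
      obtain ⟨a, ha, hac⟩ := hp
      refine ⟨a, ?_, hac⟩
      rw [← minpoly.eq_of_irreducible_of_monic hi ha hf, hd]
    · rintro ⟨a, ha, hac⟩
      have hint : IsIntegral F a := Algebra.IsIntegral.isIntegral a
      refine ⟨minpoly F a, minpoly.monic hint, minpoly.irreducible hint, ha, ?_⟩
      rw [primaryCyclic_iff _ _ (minpoly.monic hint) (minpoly.irreducible hint) (by rw [ha]; exact hdim),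
        dvd_minpoly_iff (L := L) _ _ (minpoly.monic hint) (minpoly.irreducible hint) ha]
      exact ⟨a, minpoly.aeval F a, hac⟩
  set A := Finset.univ.filter fun a : L => (minpoly F a).natDegree = finrank F L with hA
  set S := Finset.univ.filter fun X : GL (Fin c) K => X ∈ PCSet F (K := K) c (finrank F L) with hS
  have hScard : Nat.card (PCSet F (K := K) c (finrank F L)) = S.card := by
    rw [Nat.card_eq_fintype_card, hS, ← Fintype.card_subtype]
  rw [hScard, Nat.card_eq_fintype_card]
  have hLcard : 0 < Fintype.card L - 1 := by
    have := Fintype.one_lt_card (α := L); omega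
  have hA0 : ∀ a ∈ A, (Finset.univ.filter fun X : GL (Fin c) K =>
      aeval a (X : Matrix (Fin c) (Fin c) K).charpoly = 0).card =
      Fintype.card (GL (Fin c) K) / (Fintype.card L - 1) := by
    intro a ha
    have ha' : (minpoly F a).natDegree = finrank F L := by simpa [hA] using ha
    have hne : a ≠ 0 := by
      rintro rfl
      rw [minpoly.zero, natDegree_X] at ha'
      nlinarith
    rw [← count_eig a hne (gen_tower (K := K) a ha') hc hc', Nat.mul_div_cancel _ hLcard]
  have key : S.card * finrank K L = A.card * (Fintype.card (GL (Fin c) K) / (Fintype.card L - 1)) := by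
    apply Finset.card_mul_eq_card_mul (fun (X : GL (Fin c) K) (a : L) =>
      aeval a (X : Matrix (Fin c) (Fin c) K).charpoly = 0)
    · intro X hX
      obtain ⟨a₀, ha₀, h0⟩ := (hmem X).1 (by simpa [hS] using hX)
      rw [← root_count (F := F) (K := K) (X : Matrix (Fin c) (Fin c) K).charpoly
        (Matrix.charpoly_monic _).ne_zero
        (by rw [Matrix.charpoly_natDegree_eq_dim]; simpa using hc) a₀ ha₀ h0]
      congr 1
      ext a
      simp [hA, Finset.mem_bipartiteAbove]
    · intro a ha
      rw [← hA0 a ha]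
      congr 1
      ext X
      simp only [Finset.mem_bipartiteBelow, Finset.mem_filter, Finset.mem_univ, true_and,
        and_iff_right_iff_imp, hS]
      intro h
      exact (hmem X).2 ⟨a, by simpa [hA] using ha, h⟩
  rw [key]
  rcases A.eq_empty_or_nonempty with h | ⟨a, ha⟩
  · simp [h]
  · have ha' : (minpoly F a).natDegree = finrank F L := by simpa [hA] using ha
    have hne : a ≠ 0 := by
      rintro rfl
      rw [minpoly.zero, natDegree_X] at ha'
      nlinarith
    have h3 := count_eig a hne (gen_tower (K := K) a ha') hc hc'
    rw [hA0 a ha] at h3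
    rw [mul_assoc, h3]

lemma geom_bound (q : ℕ) (hq : 2 ≤ q) (m : ℕ) :
    ∑ d ∈ Finset.Icc 1 m, q ^ d + 2 ≤ 2 * q ^ m := by
  induction m with
  | zero => simp
  | succ m ih =>
    rw [Finset.sum_Icc_succ_top (by omega)]
    have : 2 * q ^ m ≤ q ^ (m + 1) := by rw [pow_succ, mul_comm]; exact Nat.mul_le_mul_left _ hq
    omega

open Classical in
lemma gen_bound {F L : Type*} [Field F] [Fintype F] [Field L] [Fintype L]
    [Algebra F L] [FiniteDimensional F L] :
    Fintype.card L + 2 ≤ (Finset.univ.filter fun a : L => (minpoly F a).natDegree = finrank F L).card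
      + 2 * Fintype.card F ^ (finrank F L / 2) := by
  set n := finrank F L with hn
  have hn0 : 0 < n := finrank_pos
  have hq : 2 ≤ Fintype.card F := Fintype.one_lt_card
  have h1 : (Finset.univ.filter fun a : L => ¬ (minpoly F a).natDegree = n) ⊆
      (Finset.Icc 1 (n / 2)).biUnion fun d =>
        (X ^ Fintype.card F ^ d - X : L[X]).roots.toFinset := by
    intro a ha
    simp only [Finset.mem_filter, Finset.mem_univ, true_and] at ha
    have hint : IsIntegral F a := Algebra.IsIntegral.isIntegral a
    set d := (minpoly F a).natDegree with hd
    have hd0 : 0 < d := minpoly.natDegree_pos hint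
    have hdvd : d ∣ n := minpoly.degree_dvd hint
    obtain ⟨k, hk⟩ := hdvd
    have hk2 : 2 ≤ k := by
      rcases k with _ | _ | k
      · omega
      · simp at hk; exact absurd hk.symm ha
      · omega
    simp only [Finset.mem_biUnion, Finset.mem_Icc, Multiset.mem_toFinset]
    refine ⟨d, ⟨hd0, ?_⟩, ?_⟩
    · rw [Nat.le_div_iff_mul_le (by norm_num)]; nlinarith
    · rw [mem_roots (FiniteField.X_pow_card_pow_sub_X_ne_zero L hd0.ne' hq)]
      have h2 : minpoly F a ∣ X ^ Nat.card F ^ d - X :=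
        (minpoly.irreducible hint).natDegree_dvd_iff_dvd_X_pow_card_pow_sub_X.1 dvd_rfl
      have h3 := aeval_eq_zero_of_dvd_aeval_eq_zero h2 (minpoly.aeval F a)
      rw [Nat.card_eq_fintype_card] at h3
      simpa [IsRoot.def] using h3
  have h2 := (Finset.card_le_card h1).trans Finset.card_biUnion_le
  have h3 : ∑ d ∈ Finset.Icc 1 (n / 2), (X ^ Fintype.card F ^ d - X : L[X]).roots.toFinset.card ≤
      ∑ d ∈ Finset.Icc 1 (n / 2), Fintype.card F ^ d := by
    apply Finset.sum_le_sum
    intro d hd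
    have hd0 : d ≠ 0 := by have := (Finset.mem_Icc.1 hd).1; omega
    refine (Multiset.toFinset_card_le _).trans ((card_roots' _).trans ?_)
    rw [FiniteField.X_pow_card_pow_sub_X_natDegree_eq L hd0 hq]
  have h4 := geom_bound (Fintype.card F) hq (n / 2)
  have h5 := Finset.card_filter_add_card_filter_not (s := Finset.univ) (fun a : L => (minpoly F a).natDegree = n)
  rw [Finset.card_univ] at h5
  omega

lemma per_r {F K : Type*} [Field F] [Fintype F] [Field K] [Finite K]
    [Algebra F K] [FiniteDimensional F K] {c r : ℕ} (h2 : 2 ≤ c) (hc : c < 2 * r) (hc' : r ≤ c) :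
    ∃ A : ℕ, Nat.card (PCSet F (K := K) c (finrank F K * r)) * r *
      (Fintype.card F ^ (finrank F K * r) - 1) = A * Nat.card (GL (Fin c) K) ∧
      A ≤ Fintype.card F ^ (finrank F K * r) - 1 ∧
      Fintype.card F ^ (finrank F K * r) + 2 ≤ A + 2 * Fintype.card F ^ (finrank F K * r / 2) := by
  classical
  obtain ⟨p, hp⟩ := CharP.exists K
  have : Fintype K := Fintype.ofFinite K
  have : Fact p.Prime := ⟨CharP.char_is_prime K p⟩
  have : NeZero r := ⟨by omega⟩
  let L := FiniteField.Extension K p r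
  let _ : Algebra F L := ((algebraMap K L).comp (algebraMap F K)).toAlgebra
  have : IsScalarTower F K L := IsScalarTower.of_algebraMap_eq' rfl
  have : FiniteDimensional K L := inferInstanceAs (Module.Finite K (FiniteField.Extension K p r))
  have : FiniteDimensional F L := FiniteDimensional.trans F K L
  have : Finite L := Module.finite_of_finite K
  have : Fintype L := Fintype.ofFinite L
  have hr : finrank K L = r := FiniteField.finrank_extension K p r
  have hbr : finrank F L = finrank F K * r := 
    (finrank_mul_finrank F K L).symm.trans (by rw [hr])
  have hL : Fintype.card L = Fintype.card F ^ (finrank F K * r) := by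
    rw [Module.card_eq_pow_finrank (K := F) (V := L), hbr]
  have h1 := PCSet_count (F := F) (K := K) (L := L) h2 (by rw [hr]; exact hc) (by rw [hr]; exact hc')
  have h3 := gen_bound (F := F) (L := L)
  rw [hr, hL] at h1
  rw [hL] at h3
  rw [hbr] at h1 h3
  refine ⟨_, h1, ?_, h3⟩
  rw [← hL, ← Finset.card_univ, ← Finset.card_erase_of_mem (Finset.mem_univ (0 : L))]
  apply Finset.card_le_card
  intro a ha
  simp only [Finset.mem_filter, Finset.mem_univ, true_and] at ha
  simp only [Finset.mem_erase, Finset.mem_univ, and_true]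
  rintro rfl
  rw [minpoly.zero, natDegree_X] at ha
  have : 0 < finrank F K := finrank_pos
  nlinarith

lemma PCSet_disjoint {F K : Type*} [Field F] [Field K] 
    [Algebra F K] [FiniteDimensional F K] {c r s : ℕ} (hr : c < 2 * r) (hs : c < 2 * s)
    (hne : r ≠ s) : Disjoint (PCSet F (K := K) c (finrank F K * r)) (PCSet F c (finrank F K * s)) := by
  rw [Set.disjoint_left]
  rintro X ⟨f, hf, hfi, hfd, hfp⟩ ⟨g, hg, hgi, hgd, hgp⟩
  have hb : 0 < finrank F K := finrank_pos
  have hdim : finrank F (Fin c → K) = finrank F K * c := by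
    rw [Module.finrank_pi_fintype, Finset.sum_const, Finset.card_univ, Fintype.card_fin, smul_eq_mul,
      mul_comm]
  rw [primaryCyclic_iff _ f hf hfi (by rw [hfd, hdim]; nlinarith)] at hfp
  rw [primaryCyclic_iff _ g hg hgi (by rw [hgd, hdim]; nlinarith)] at hgp
  have hcop : IsCoprime f g := by
    rw [hfi.coprime_iff_not_dvd]
    intro hdvd
    have := eq_of_monic_of_associated hf hg (hfi.associated_of_dvd hgi hdvd)
    rw [this, hgd] at hfd
    exact hne (Nat.eq_of_mul_eq_mul_left hb hfd).symm
  have := natDegree_le_of_dvd ((hcop.mul_dvd hfp hgp).trans (LinearMap.minpoly_dvd_charpoly _))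
    (LinearMap.charpoly_monic _).ne_zero
  rw [hf.natDegree_mul hg, LinearMap.charpoly_natDegree, hfd, hgd, hdim, ← mul_add] at this
  have := Nat.le_of_mul_le_mul_left this hb
  omega

lemma harm_lower (m n : ℕ) (h : m ≤ n) :
    Real.log (((n : ℝ) + 1) / (m + 1)) ≤ ∑ r ∈ Finset.Ioc m n, (1 : ℝ) / r := by
  induction n, h using Nat.le_induction with
  | base =>
    have : (m : ℝ) + 1 ≠ 0 := by positivity
    simp [div_self this]
  | succ n hmn ih =>
    rw [Finset.sum_Ioc_succ_top hmn]
    have h1 : (((n + 1 : ℕ) : ℝ) + 1) / (m + 1) =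
        ((n : ℝ) + 1) / (m + 1) * (((n : ℝ) + 2) / (n + 1)) := by
      push_cast; field_simp; ring
    rw [h1, Real.log_mul (by positivity) (by positivity)]
    have h2 := Real.log_le_sub_one_of_pos (x := ((n : ℝ) + 2) / (n + 1)) (by positivity)
    have h3 : ((n : ℝ) + 2) / (n + 1) - 1 = 1 / ((n + 1 : ℕ) : ℝ) := by
      push_cast; field_simp; ring
    linarith

lemma harm_upper (m n : ℕ) (hm : 0 < m) (h : m ≤ n) :
    ∑ r ∈ Finset.Ioc m n, (1 : ℝ) / r ≤ Real.log ((n : ℝ) / m) := by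
  have hm' : (0 : ℝ) < m := by exact_mod_cast hm
  induction n, h using Nat.le_induction with
  | base => simp [div_self hm'.ne']
  | succ n hmn ih =>
    have hn : (0 : ℝ) < n := by exact_mod_cast lt_of_lt_of_le hm hmn
    rw [Finset.sum_Ioc_succ_top hmn]
    have h1 : (((n + 1 : ℕ) : ℝ)) / m = (n : ℝ) / m * (((n : ℝ) + 1) / n) := by
      push_cast; field_simp
    rw [h1, Real.log_mul (by positivity) (by positivity)]
    have h2 := Real.one_sub_inv_le_log_of_pos (x := ((n : ℝ) + 1) / n) (by positivity)
    have h3 : 1 - (((n : ℝ) + 1) / n)⁻¹ = 1 / ((n + 1 : ℕ) : ℝ) := by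
      push_cast; field_simp; ring
    linarith

lemma sum_lower (c : ℕ) :
    Real.log 2 - 1 / ((c : ℝ) + 1) ≤ ∑ r ∈ Finset.Ioc (c / 2) c, (1 : ℝ) / r := by
  refine le_trans ?_ (harm_lower (c / 2) c (Nat.div_le_self _ _))
  have h1 : (((c / 2 : ℕ) : ℝ) + 1) ≤ ((c : ℝ) + 2) / 2 := by
    have : ((c / 2 : ℕ) : ℝ) ≤ (c : ℝ) / 2 := Nat.cast_div_le
    linarith
  have h2 : Real.log (2 * ((c + 1) / (c + 2) : ℝ)) ≤ Real.log (((c : ℝ) + 1) / ((c / 2 : ℕ) + 1)) := by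
    apply Real.log_le_log (by positivity)
    rw [show 2 * (((c : ℝ) + 1) / (c + 2)) = (c + 1) / ((c + 2) / 2) by field_simp]
    gcongr
  refine le_trans ?_ h2
  rw [Real.log_mul (by norm_num) (by positivity)]
  have h3 := Real.one_sub_inv_le_log_of_pos (x := ((c : ℝ) + 1) / (c + 2)) (by positivity)
  have h4 : 1 - (((c : ℝ) + 1) / (c + 2))⁻¹ = - (1 / ((c : ℝ) + 1)) := by
    field_simp; ring
  linarith

lemma sum_upper (c : ℕ) (hc : 2 ≤ c) :
    ∑ r ∈ Finset.Ioc (c / 2) c, (1 : ℝ) / r ≤ Real.log 2 + 1 / (c : ℝ) := by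
  obtain ⟨m, rfl | rfl⟩ := Nat.even_or_odd' c
  · have e : 2 * m / 2 = m := by omega
    have hm : 0 < m := by omega
    have hm' : (m : ℝ) ≠ 0 := by positivity
    rw [e]
    have h := harm_upper m (2 * m) hm (by omega)
    rw [show ((2 * m : ℕ) : ℝ) / m = 2 by push_cast; field_simp] at h
    have : (0 : ℝ) ≤ 1 / ((2 * m : ℕ) : ℝ) := by positivity
    linarith
  · have e : (2 * m + 1) / 2 = m := by omega
    have hm : 0 < m := by omega
    have hm' : (m : ℝ) ≠ 0 := by positivity
    rw [e, Finset.sum_Ioc_succ_top (by omega)]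
    have h := harm_upper m (2 * m) hm (by omega)
    rw [show ((2 * m : ℕ) : ℝ) / m = 2 by push_cast; field_simp] at h
    linarith

lemma sum_le_one (c : ℕ) : ∑ r ∈ Finset.Ioc (c / 2) c, (1 : ℝ) / r ≤ 1 := by
  calc ∑ r ∈ Finset.Ioc (c / 2) c, (1 : ℝ) / r
      ≤ ∑ r ∈ Finset.Ioc (c / 2) c, (1 : ℝ) / ((c / 2 : ℕ) + 1) := by
        apply Finset.sum_le_sum
        intro r hr
        have h := (Finset.mem_Ioc.1 hr).1
        have : (((c / 2 : ℕ) : ℝ) + 1) ≤ r := by exact_mod_cast h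
        gcongr
    _ = ((c - c / 2 : ℕ) : ℝ) / ((c / 2 : ℕ) + 1) := by
        rw [Finset.sum_const, Nat.card_Ioc, nsmul_eq_mul]; ring
    _ ≤ 1 := by
        rw [div_le_one (by positivity)]
        have : c - c / 2 ≤ c / 2 + 1 := by omega
        exact_mod_cast this

lemma ratio_lower (q n A : ℕ) (k : ℕ) (hq : 2 ≤ q) (hn : 1 ≤ n) (hk : k ≤ 2 * n)
    (hA : q ^ n + 2 ≤ A + 2 * q ^ (n / 2)) :
    1 - 2 / (q : ℝ) ^ ((k : ℝ) / 4) < (A : ℝ) / ((q : ℝ) ^ n - 1) := by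
  have hq1 : (1 : ℝ) ≤ q := by exact_mod_cast (by omega : 1 ≤ q)
  have hq1' : (1 : ℝ) < q := by exact_mod_cast (by omega : 1 < q)
  have hq0 : (0 : ℝ) ≤ q := by linarith
  set y := (q : ℝ) ^ ((k : ℝ) / 4) with hy
  set x := (q : ℝ) ^ ((n : ℝ) / 2) with hx
  have hk' : (k : ℝ) ≤ 2 * n := by exact_mod_cast hk
  have hyx : y ≤ x := Real.rpow_le_rpow_of_exponent_le hq1 (by linarith)
  have hy0 : 0 < y := by positivity
  have hx1 : 1 ≤ x := Real.one_le_rpow hq1 (by positivity)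
  have hxx : x * x = (q : ℝ) ^ n := by
    rw [hx, ← Real.rpow_add (by linarith), add_halves, Real.rpow_natCast]
  have hfl : (q : ℝ) ^ (n / 2) ≤ x := by
    rw [hx, ← Real.rpow_natCast]
    exact Real.rpow_le_rpow_of_exponent_le hq1 Nat.cast_div_le
  have hQ : 0 < (q : ℝ) ^ n - 1 := by
    have := one_lt_pow₀ hq1' (by omega : n ≠ 0)
    linarith
  have hA' : (q : ℝ) ^ n + 2 ≤ A + 2 * (q : ℝ) ^ (n / 2) := by exact_mod_cast hA
  rw [lt_div_iff₀ hQ]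
  have h1 : 2 * (x - 1 / x) ≤ 2 / y * ((q : ℝ) ^ n - 1) := by
    have h2 : 2 * (x - 1 / x) = 2 / x * ((q : ℝ) ^ n - 1) := by
      rw [← hxx]; field_simp
    rw [h2]
    gcongr
  have h3 : 1 / x ≤ 1 := by rw [div_le_one (by linarith)]; exact hx1
  linarith

theorem stmt18 (q b c : ℕ) (hq : IsPrimePow q) (hb : 1 ≤ b) (hc : 2 ≤ c)
    (F K : Type*) [Field F] [Fintype F] (hF : Fintype.card F = q)
    [Field K] [Algebra F K] [FiniteDimensional F K] (hK : Module.finrank F K = b)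
    (N : Set (GL (Fin c) K))
    (hN : N = {A : GL (Fin c) K | ∃ r : ℕ, c < 2 * r ∧ r ≤ c ∧ ∃ f : Polynomial F,
      f.Monic ∧ Irreducible f ∧ f.natDegree = b * r ∧
      IsPrimaryCyclic (((↑A : Matrix (Fin c) (Fin c) K).mulVecLin).restrictScalars F) f}) :
    Real.log 2 - 1 / ((c : ℝ) + 1) - 2 / (q : ℝ) ^ (((b * c : ℕ) : ℝ) / 4) <
      (Nat.card N : ℝ) / Nat.card (GL (Fin c) K) ∧
    (Nat.card N : ℝ) / Nat.card (GL (Fin c) K) ≤ Real.log 2 + 1 / (c : ℝ) := by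
  classical
  have : Finite K := Module.finite_of_finite F
  have : Fintype K := Fintype.ofFinite K
  have hq2 : 2 ≤ q := by rw [← hF]; exact Fintype.one_lt_card
  have hmemr : ∀ r, r ∈ Finset.Ioc (c / 2) c ↔ c < 2 * r ∧ r ≤ c := by
    intro r; rw [Finset.mem_Ioc]; omega
  have hcard : Nat.card N = ∑ r ∈ Finset.Ioc (c / 2) c, Nat.card (PCSet F (K := K) c (b * r)) := by
    have h1 : ∀ S : Set (GL (Fin c) K), Nat.card S = (Finset.univ.filter (· ∈ S)).card := by
      intro S
      rw [Nat.card_eq_fintype_card, ← Fintype.card_subtype]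
    simp only [h1]
    rw [← Finset.card_biUnion]
    · congr 1
      ext X
      simp only [Finset.mem_filter, Finset.mem_univ, true_and, Finset.mem_biUnion, hmemr, hN]
      constructor
      · rintro ⟨r, h1, h2, h3⟩; exact ⟨r, ⟨h1, h2⟩, h3⟩
      · rintro ⟨r, ⟨h1, h2⟩, h3⟩; exact ⟨r, h1, h2, h3⟩
    · intro r hr s hs hne
      have hd := PCSet_disjoint (F := F) (K := K) (c := c) ((hmemr r).1 hr).1 ((hmemr s).1 hs).1 hne
      rw [hK, Set.disjoint_left] at hd
      rw [Function.onFun, Finset.disjoint_left]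
      intro X hX hX'
      simp only [Finset.mem_filter, Finset.mem_univ, true_and] at hX hX'
      exact hd hX hX'
  set G : ℝ := (Nat.card (GL (Fin c) K) : ℝ) with hG
  have hG0 : 0 < G := by
    rw [hG]; exact_mod_cast Nat.card_pos
  set ε : ℝ := 2 / (q : ℝ) ^ (((b * c : ℕ) : ℝ) / 4) with hε
  have hε0 : 0 < ε := by
    have : (0 : ℝ) < q := by exact_mod_cast (by omega : 0 < q)
    positivity
  have hterm : ∀ r ∈ Finset.Ioc (c / 2) c,
      (1 - ε) * (1 / (r : ℝ)) < (Nat.card (PCSet F (K := K) c (b * r)) : ℝ) / G ∧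
      (Nat.card (PCSet F (K := K) c (b * r)) : ℝ) / G ≤ 1 / (r : ℝ) := by
    intro r hr
    obtain ⟨hr1, hr2⟩ := (hmemr r).1 hr
    obtain ⟨A, hA1, hA2, hA3⟩ := per_r (F := F) (K := K) hc hr1 hr2
    rw [hK, hF] at hA1 hA2 hA3
    have hr0 : (0 : ℝ) < r := by exact_mod_cast (by omega : 0 < r)
    have hbr : 1 ≤ b * r := Nat.mul_pos hb (by omega)
    have hlow := ratio_lower q (b * r) A (b * c) hq2 hbr (by nlinarith) hA3
    have hQ1 : 1 < q ^ (b * r) := Nat.one_lt_pow (by omega) (by omega)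
    have hQ : (0 : ℝ) < (q : ℝ) ^ (b * r) - 1 := by
      have : (1 : ℝ) < (q : ℝ) ^ (b * r) := by exact_mod_cast hQ1
      linarith
    have hA2' : (A : ℝ) ≤ (q : ℝ) ^ (b * r) - 1 := by
      have : A + 1 ≤ q ^ (b * r) := by omega
      have : (A : ℝ) + 1 ≤ (q : ℝ) ^ (b * r) := by exact_mod_cast this
      linarith
    have hA1' : (Nat.card (PCSet F (K := K) c (b * r)) : ℝ) * r * ((q : ℝ) ^ (b * r) - 1) = A * G := by
      have h := congrArg (Nat.cast (R := ℝ)) hA1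
      rw [Nat.cast_mul, Nat.cast_mul, Nat.cast_sub hQ1.le, Nat.cast_mul] at h
      rw [Nat.cast_pow, Nat.cast_one] at h
      exact h
    have heq : (Nat.card (PCSet F (K := K) c (b * r)) : ℝ) / G =
        (A : ℝ) / ((q : ℝ) ^ (b * r) - 1) * (1 / (r : ℝ)) := by
      rw [div_mul_div_comm, mul_one, div_eq_div_iff hG0.ne' (by positivity), ← hA1']
      ring
    rw [heq]
    constructor
    · exact mul_lt_mul_of_pos_right hlow (by positivity)
    · have : (A : ℝ) / ((q : ℝ) ^ (b * r) - 1) ≤ 1 := by rw [div_le_one hQ]; exact hA2'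
      have h0 : 0 < 1 / (r : ℝ) := by positivity
      nlinarith
  have hsum : (Nat.card N : ℝ) / G = ∑ r ∈ Finset.Ioc (c / 2) c,
      (Nat.card (PCSet F (K := K) c (b * r)) : ℝ) / G := by
    rw [hcard, Nat.cast_sum, Finset.sum_div]
  rw [hsum]
  constructor
  · have h1 : ∑ r ∈ Finset.Ioc (c / 2) c, (1 - ε) * (1 / (r : ℝ)) <
        ∑ r ∈ Finset.Ioc (c / 2) c, (Nat.card (PCSet F (K := K) c (b * r)) : ℝ) / G :=
      Finset.sum_lt_sum_of_nonempty ⟨c, (hmemr c).2 ⟨by omega, le_rfl⟩⟩ fun r hr => (hterm r hr).1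
    rw [← Finset.mul_sum] at h1
    have h2 := sum_lower c
    have h3 := sum_le_one c
    nlinarith
  · exact (Finset.sum_le_sum fun r hr => (hterm r hr).2).trans (sum_upper c hc)
end
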